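/- arXiv:1710.00216 — 3 statements merged into one kernel-verified Lean document; each statement's English description precedes it below -/
import Mathlib

section
/- For every k ∈ (0,1) the following three quantities are strictly positive: ι₄(k) = (2 − k²)K(k) − 2E(k), ι₅(k) = (2 − k²)E(k)K(k) + (1 − k²)K(k)² − 3E(k)², and ι₆(k) = E(k) − (1 − k²)K(k). -/
open Real Set Filter Topology

/-- Complete elliptic integral of the first kind. -/
noncomputable def K (k : ℝ) : ℝ :=
  ∫ t in (0:ℝ)..(π/2), 1 / Real.sqrt (1 - k^2 * Real.sin t ^ 2)

/-- Complete elliptic integral of the second kind. -/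
noncomputable def E (k : ℝ) : ℝ :=
  ∫ t in (0:ℝ)..(π/2), Real.sqrt (1 - k^2 * Real.sin t ^ 2)

noncomputable def ι₄ (k : ℝ) : ℝ := (2 - k^2) * K k - 2 * E k

noncomputable def ι₅ (k : ℝ) : ℝ :=
  (2 - k^2) * E k * K k + (1 - k^2) * (K k)^2 - 3 * (E k)^2

noncomputable def ι₆ (k : ℝ) : ℝ := E k - (1 - k^2) * K k


/-- `1 - m sin² t` -/
noncomputable def uu (m t : ℝ) : ℝ := 1 - m * Real.sin t ^ 2

noncomputable def KK (m : ℝ) : ℝ := ∫ t in (0:ℝ)..(π/2), 1 / √(uu m t)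
noncomputable def EE (m : ℝ) : ℝ := ∫ t in (0:ℝ)..(π/2), √(uu m t)

lemma uu_lower {m c t : ℝ} (h1 : c ≤ 1) (h2 : c ≤ 1 - m) : c ≤ uu m t := by
  unfold uu
  nlinarith [Real.sin_sq_le_one t, sq_nonneg (Real.sin t)]

lemma uu_pos {m : ℝ} (hm : m < 1) (t : ℝ) : 0 < uu m t := by
  have : min 1 (1 - m) ≤ uu m t := uu_lower (min_le_left _ _) (min_le_right _ _)
  have h : 0 < min 1 (1 - m) := lt_min one_pos (by linarith)
  linarith

lemma uu_cont (m : ℝ) : Continuous (uu m) := by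
  unfold uu; fun_prop

lemma sqrt_uu_pos {m : ℝ} (hm : m < 1) (t : ℝ) : 0 < √(uu m t) := Real.sqrt_pos.2 (uu_pos hm t)

lemma sqrt_uu_cont (m : ℝ) : Continuous (fun t => √(uu m t)) := (uu_cont m).sqrt

lemma inv_cont {m : ℝ} (hm : m < 1) : Continuous (fun t => 1 / √(uu m t)) :=
  continuous_const.div (sqrt_uu_cont m) (fun t => (sqrt_uu_pos hm t).ne')

lemma dE_cont {m : ℝ} (hm : m < 1) :
    Continuous (fun t => -(Real.sin t ^ 2) / (2 * √(uu m t))) :=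
  (Real.continuous_sin.pow 2).neg.div (continuous_const.mul (sqrt_uu_cont m))
    (fun t => (mul_pos two_pos (sqrt_uu_pos hm t)).ne')

lemma dK_cont {m : ℝ} (hm : m < 1) :
    Continuous (fun t => Real.sin t ^ 2 / (2 * √(uu m t) ^ 3)) :=
  (Real.continuous_sin.pow 2).div (continuous_const.mul ((sqrt_uu_cont m).pow 3))
    (fun t => (mul_pos two_pos (pow_pos (sqrt_uu_pos hm t) 3)).ne')

lemma cube_cont {m : ℝ} (hm : m < 1) :
    Continuous (fun t => 1 / √(uu m t) ^ 3) :=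
  continuous_const.div ((sqrt_uu_cont m).pow 3)
    (fun t => (pow_pos (sqrt_uu_pos hm t) 3).ne')

lemma hasDeriv_sqrt {m : ℝ} (hm : m < 1) (t : ℝ) :
    HasDerivAt (fun x => √(uu x t)) (-(Real.sin t ^ 2) / (2 * √(uu m t))) m := by
  have h : HasDerivAt (fun x => uu x t) (-(Real.sin t ^ 2)) m := by
    unfold uu
    simpa using ((hasDerivAt_id m).mul_const (Real.sin t ^ 2)).const_sub 1
  exact h.sqrt (uu_pos hm t).ne'

lemma hasDeriv_inv {m : ℝ} (hm : m < 1) (t : ℝ) :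
    HasDerivAt (fun x => 1 / √(uu x t)) (Real.sin t ^ 2 / (2 * √(uu m t) ^ 3)) m := by
  have h := (hasDeriv_sqrt hm t).fun_inv (sqrt_uu_pos hm t).ne'
  have hp := sqrt_uu_pos hm t
  simp only [one_div]
  refine h.congr_deriv ?_
  field_simp

lemma sin_sq_abs (t : ℝ) : |Real.sin t ^ 2| ≤ 1 := by
  rw [abs_of_nonneg (sq_nonneg _)]; exact Real.sin_sq_le_one t

lemma sqrt_lower {m x : ℝ} (hx : x ∈ Metric.ball m ((1 - m) / 2)) (t : ℝ) :
    √(min 1 ((1 - m) / 2)) ≤ √(uu x t) := by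
  rw [Metric.mem_ball, Real.dist_eq, abs_lt] at hx
  exact Real.sqrt_le_sqrt (uu_lower (min_le_left _ _) ((min_le_right _ _).trans (by linarith)))

lemma EE_deriv {m : ℝ} (hm : m < 1) :
    HasDerivAt EE (∫ t in (0:ℝ)..(π/2), -(Real.sin t ^ 2) / (2 * √(uu m t))) m := by
  have hc : 0 < √(min 1 ((1 - m) / 2)) := Real.sqrt_pos.2 (lt_min one_pos (by linarith))
  refine (intervalIntegral.hasDerivAt_integral_of_dominated_loc_of_deriv_le
    (s := Metric.ball m ((1 - m) / 2)) (F := fun x t => √(uu x t))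
    (F' := fun x t => -(Real.sin t ^ 2) / (2 * √(uu x t)))
    (bound := fun _ => 1 / (2 * √(min 1 ((1 - m) / 2))))
    (Metric.ball_mem_nhds _ (by linarith)) ?_ ?_ ?_ ?_ ?_ ?_).2
  · exact Eventually.of_forall fun x => (sqrt_uu_cont x).aestronglyMeasurable
  · exact (sqrt_uu_cont m).intervalIntegrable _ _
  · exact (dE_cont hm).aestronglyMeasurable
  · refine Eventually.of_forall fun t _ x hx => ?_
    have h1 := sqrt_lower hx t
    rw [Real.norm_eq_abs, abs_div, abs_neg, abs_of_pos (show 0 < 2 * √(uu x t) by linarith)]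
    have := sin_sq_abs t
    gcongr
  · exact intervalIntegrable_const
  · refine Eventually.of_forall fun t _ x hx => ?_
    rw [Metric.mem_ball, Real.dist_eq, abs_lt] at hx
    exact hasDeriv_sqrt (by linarith) t

lemma KK_deriv {m : ℝ} (hm : m < 1) :
    HasDerivAt KK (∫ t in (0:ℝ)..(π/2), Real.sin t ^ 2 / (2 * √(uu m t) ^ 3)) m := by
  have hc : 0 < √(min 1 ((1 - m) / 2)) := Real.sqrt_pos.2 (lt_min one_pos (by linarith))
  refine (intervalIntegral.hasDerivAt_integral_of_dominated_loc_of_deriv_le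
    (s := Metric.ball m ((1 - m) / 2)) (F := fun x t => 1 / √(uu x t))
    (F' := fun x t => Real.sin t ^ 2 / (2 * √(uu x t) ^ 3))
    (bound := fun _ => 1 / (2 * √(min 1 ((1 - m) / 2)) ^ 3))
    (Metric.ball_mem_nhds _ (by linarith)) ?_ ?_ ?_ ?_ ?_ ?_).2
  · refine Eventually.of_forall fun x => ?_
    have : Measurable (fun t => 1 / √(uu x t)) := by
      simp only [one_div]
      exact (sqrt_uu_cont x).measurable.inv
    exact this.aestronglyMeasurable
  · exact (inv_cont hm).intervalIntegrable _ _
  · exact (dK_cont hm).aestronglyMeasurable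
  · refine Eventually.of_forall fun t _ x hx => ?_
    have h1 := sqrt_lower hx t
    have h2 : 0 < √(uu x t) := by linarith
    rw [Real.norm_eq_abs, abs_div, abs_of_pos (show 0 < 2 * √(uu x t) ^ 3 by positivity)]
    have := sin_sq_abs t
    gcongr
  · exact intervalIntegrable_const
  · refine Eventually.of_forall fun t _ x hx => ?_
    rw [Metric.mem_ball, Real.dist_eq, abs_lt] at hx
    exact hasDeriv_inv (by linarith) t

/-- the integral of `Δ⁻³` is `E/(1-m)` -/
lemma cube_int {m : ℝ} (hm : m < 1) :
    (1 - m) * ∫ t in (0:ℝ)..(π/2), 1 / √(uu m t) ^ 3 = EE m := by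
  have key : ∫ t in (0:ℝ)..(π/2), (√(uu m t) - (1 - m) * (1 / √(uu m t) ^ 3)) = 
      m * Real.sin (π/2) * Real.cos (π/2) / √(uu m (π/2))
       - m * Real.sin 0 * Real.cos 0 / √(uu m 0) := by
    apply intervalIntegral.integral_eq_sub_of_hasDerivAt
      (f := fun t => m * Real.sin t * Real.cos t / √(uu m t))
    · intro t _
      have hp := sqrt_uu_pos hm t
      have hs : √(uu m t) ^ 2 = 1 - m * Real.sin t ^ 2 := Real.sq_sqrt (uu_pos hm t).le
      have hu : HasDerivAt (uu m) (-(m * (2 * Real.sin t * Real.cos t))) t := by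
        unfold uu
        simpa using (((Real.hasDerivAt_sin t).pow 2).const_mul m).const_sub 1
      have h := (((Real.hasDerivAt_sin t).const_mul m).mul (Real.hasDerivAt_cos t)).div
        (hu.sqrt (uu_pos hm t).ne') hp.ne'
      refine h.congr_deriv ?_
      have hcs : Real.cos t ^ 2 = 1 - Real.sin t ^ 2 := Real.cos_sq' t
      simp only [Pi.mul_apply]
      generalize √(uu m t) = d at *
      generalize Real.sin t = s at *
      generalize Real.cos t = c at *
      field_simp
      have e1 : d ^ 4 = (1 - m * s ^ 2) ^ 2 := by rw [← hs]; ring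
      ring_nf
      simp only [e1, hs, hcs]
      ring
    · exact ((sqrt_uu_cont m).sub (continuous_const.mul (cube_cont hm))).intervalIntegrable _ _
  rw [intervalIntegral.integral_sub ((sqrt_uu_cont m).intervalIntegrable _ _)
    (((cube_cont hm).const_mul (1 - m)).intervalIntegrable _ _),
    intervalIntegral.integral_const_mul] at key
  simp at key
  unfold EE
  simp only [one_div]
  linarith

lemma EE_deriv' {m : ℝ} (h0 : 0 < m) (hm : m < 1) :
    HasDerivAt EE (-(KK m - EE m) / (2 * m)) m := by
  refine (EE_deriv hm).congr_deriv ?_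
  unfold KK EE
  rw [← intervalIntegral.integral_sub ((inv_cont hm).intervalIntegrable _ _)
    ((sqrt_uu_cont m).intervalIntegrable _ _), ← intervalIntegral.integral_neg,
    ← intervalIntegral.integral_div]
  congr 1; ext t
  have hp := sqrt_uu_pos hm t
  have hs : √(uu m t) ^ 2 = 1 - m * Real.sin t ^ 2 := Real.sq_sqrt (uu_pos hm t).le
  field_simp
  rw [hs]; ring

lemma KK_deriv' {m : ℝ} (h0 : 0 < m) (hm : m < 1) :
    HasDerivAt KK ((EE m / (1 - m) - KK m) / (2 * m)) m := by
  refine (KK_deriv hm).congr_deriv ?_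
  have h1 : (1 - m) ≠ 0 := by linarith
  have : EE m / (1 - m) = ∫ t in (0:ℝ)..(π/2), 1 / √(uu m t) ^ 3 := by
    rw [← cube_int hm]; field_simp
  rw [this]
  unfold KK
  rw [← intervalIntegral.integral_sub ((cube_cont hm).intervalIntegrable _ _)
    ((inv_cont hm).intervalIntegrable _ _), 
    ← intervalIntegral.integral_div]
  congr 1; ext t
  have hp := sqrt_uu_pos hm t
  have hs : √(uu m t) ^ 2 = 1 - m * Real.sin t ^ 2 := Real.sq_sqrt (uu_pos hm t).le
  field_simp
  rw [hs]; ring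

lemma half_pi_pos' : (0:ℝ) < π / 2 := by positivity

lemma EE_pos {m : ℝ} (hm : m < 1) : 0 < EE m :=
  intervalIntegral.intervalIntegral_pos_of_pos ((sqrt_uu_cont m).intervalIntegrable _ _)
    (sqrt_uu_pos hm) half_pi_pos'

lemma KK_zero : KK 0 = π / 2 := by simp [KK, uu]
lemma EE_zero : EE 0 = π / 2 := by simp [EE, uu]

lemma D_nonneg {m : ℝ} (h0 : 0 ≤ m) (hm : m < 1) : 0 ≤ KK m - EE m := by
  unfold KK EE
  rw [← intervalIntegral.integral_sub ((inv_cont hm).intervalIntegrable _ _)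
    ((sqrt_uu_cont m).intervalIntegrable _ _)]
  apply intervalIntegral.integral_nonneg half_pi_pos'.le
  intro t _
  have hp := sqrt_uu_pos hm t
  have hs : √(uu m t) ^ 2 = 1 - m * Real.sin t ^ 2 := Real.sq_sqrt (uu_pos hm t).le
  have : 1 / √(uu m t) - √(uu m t) = m * Real.sin t ^ 2 / √(uu m t) := by
    field_simp; rw [hs]; ring
  rw [this]; positivity

noncomputable def HH (m : ℝ) : ℝ :=
  m * EE m * (1 / √(4 - m) + 1 / √(1 - m)) - (√(4 - m) + √(1 - m)) * (KK m - EE m)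

lemma EE_cont {m : ℝ} (hm : m < 1) : ContinuousAt EE m := (EE_deriv hm).continuousAt
lemma KK_cont {m : ℝ} (hm : m < 1) : ContinuousAt KK m := (KK_deriv hm).continuousAt

lemma HH_deriv {m : ℝ} (h0 : 0 < m) (hm : m < 1) : 0 < deriv HH m := by
  have ha : 0 < √(4 - m) := Real.sqrt_pos.2 (by linarith)
  have hb : 0 < √(1 - m) := Real.sqrt_pos.2 (by linarith)
  have ha2 : √(4 - m) ^ 2 = 4 - m := Real.sq_sqrt (by linarith)
  have hb2 : √(1 - m) ^ 2 = 1 - m := Real.sq_sqrt (by linarith)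
  have da : HasDerivAt (fun x : ℝ => √(4 - x)) (-1 / (2 * √(4 - m))) m :=
    ((hasDerivAt_id m).const_sub 4).sqrt (by simp; linarith)
  have db : HasDerivAt (fun x : ℝ => √(1 - x)) (-1 / (2 * √(1 - m))) m :=
    ((hasDerivAt_id m).const_sub 1).sqrt (by simp; linarith)
  have dE := EE_deriv' h0 hm
  have dK := KK_deriv' h0 hm
  have hE := EE_pos hm
  have h := (((hasDerivAt_id m).fun_mul dE).fun_mul ((da.fun_inv ha.ne').fun_add (db.fun_inv hb.ne'))).fun_sub
    ((da.fun_add db).fun_mul (dK.fun_sub dE))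
  have hh : HasDerivAt HH (EE m * ((√(4 - m) - 2 * √(1 - m)) ^ 2 * (√(4 - m) + √(1 - m)) /
      (2 * √(4 - m) ^ 3 * √(1 - m) ^ 3))) m := by
    unfold HH
    simp only [one_div]
    refine h.congr_deriv ?_
    simp only [id]
    rw [← hb2]
    have hm1 : m = 1 - √(1 - m) ^ 2 := by linarith
    have hA : √(4 - m) ^ 2 = √(1 - m) ^ 2 + 3 := by linarith
    have hm0 := h0.ne'
    rw [Real.sqrt_sq hb.le]
    generalize √(4 - m) = a at *
    generalize √(1 - m) = b at *
    generalize EE m = e at *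
    generalize KK m = k at *
    have hb1 : b ^ 2 ≠ 1 := by intro h; apply hm0; linarith
    field_simp
    have e3 : a ^ 3 = a * (b ^ 2 + 3) := by rw [← hA]; ring
    have e4 : a ^ 4 = (b ^ 2 + 3) ^ 2 := by rw [← hA]; ring
    have e5 : a ^ 5 = a * (b ^ 2 + 3) ^ 2 := by rw [← hA]; ring
    subst hm1
    ring_nf
    simp only [e3, e4, hA]
    ring
  rw [hh.deriv]
  have hne : √(4 - m) - 2 * √(1 - m) ≠ 0 := by
    intro h
    have : √(4 - m) = 2 * √(1 - m) := by linarith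
    rw [this] at ha2
    nlinarith
  positivity

lemma HH_pos {m : ℝ} (h0 : 0 < m) (hm : m < 1) : 0 < HH m := by
  have hmono : StrictMonoOn HH (Set.Ico 0 1) := by
    apply strictMonoOn_of_deriv_pos (convex_Ico 0 1)
    · intro x hx
      apply ContinuousAt.continuousWithinAt
      have := EE_cont hx.2
      have := KK_cont hx.2
      have ha : √(4 - x) ≠ 0 := (Real.sqrt_pos.2 (by linarith [hx.2])).ne'
      have hb : √(1 - x) ≠ 0 := (Real.sqrt_pos.2 (by linarith [hx.2])).ne'
      unfold HH
      fun_prop (disch := assumption)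
    · intro x hx
      rw [interior_Ico] at hx
      exact HH_deriv hx.1 hx.2
  have := hmono (show (0:ℝ) ∈ Set.Ico 0 1 by simp) ⟨h0.le, hm⟩ h0
  have hz : HH 0 = 0 := by simp [HH, KK_zero, EE_zero]
  linarith

noncomputable def JJ (m : ℝ) : ℝ :=
  (2 - m) * EE m * KK m + (1 - m) * (KK m)^2 - 3 * (EE m)^2

lemma JJ_deriv {m : ℝ} (h0 : 0 < m) (hm : m < 1) : 0 < deriv JJ m := by
  have dE := EE_deriv' h0 hm
  have dK := KK_deriv' h0 hm
  have hE := EE_pos hm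
  have hD := D_nonneg h0.le hm
  have h := (((((hasDerivAt_id m).const_sub 2).fun_mul dE).fun_mul dK).fun_add
    (((hasDerivAt_id m).const_sub 1).fun_mul (dK.fun_pow 2))).fun_sub ((dE.fun_pow 2).const_mul 3)
  have hn : 0 < 1 - m := by linarith
  have hh : HasDerivAt JJ ((m ^ 2 * EE m ^ 2 - (4 - m) * (1 - m) * (KK m - EE m) ^ 2) /
      (2 * m * (1 - m))) m := by
    unfold JJ
    refine h.congr_deriv ?_
    simp only [id]
    field_simp
    ring
  rw [hh.deriv]
  have hH := HH_pos h0 hm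
  have ha : 0 < √(4 - m) := Real.sqrt_pos.2 (by linarith)
  have hb : 0 < √(1 - m) := Real.sqrt_pos.2 (by linarith)
  have ha2 : √(4 - m) ^ 2 = 4 - m := Real.sq_sqrt (by linarith)
  have hb2 : √(1 - m) ^ 2 = 1 - m := Real.sq_sqrt (by linarith)
  have e : HH m = (√(4 - m) + √(1 - m)) / (√(4 - m) * √(1 - m)) *
      (m * EE m - √(4 - m) * √(1 - m) * (KK m - EE m)) := by
    unfold HH; field_simp; ring
  rw [e] at hH
  have h1 := (pos_iff_pos_of_mul_pos hH).1 (by positivity)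
  have h2 : (√(4 - m) * √(1 - m) * (KK m - EE m)) ^ 2 < (m * EE m) ^ 2 := by
    apply pow_lt_pow_left₀ (by linarith) (by positivity) two_ne_zero
  rw [mul_pow, mul_pow, mul_pow, ha2, hb2] at h2
  apply div_pos (by linarith) (by positivity)

lemma JJ_pos {m : ℝ} (h0 : 0 < m) (hm : m < 1) : 0 < JJ m := by
  have hmono : StrictMonoOn JJ (Set.Ico 0 1) := by
    apply strictMonoOn_of_deriv_pos (convex_Ico 0 1)
    · intro x hx
      apply ContinuousAt.continuousWithinAt
      have := EE_cont hx.2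
      have := KK_cont hx.2
      unfold JJ
      fun_prop
    · intro x hx
      rw [interior_Ico] at hx
      exact JJ_deriv hx.1 hx.2
  have := hmono (show (0:ℝ) ∈ Set.Ico 0 1 by simp) ⟨h0.le, hm⟩ h0
  have hz : JJ 0 = 0 := by simp [JJ, KK_zero, EE_zero]; ring
  linarith

lemma iota_four_pos {m : ℝ} (h0 : 0 < m) (hm : m < 1) : 0 < (2 - m) * KK m - 2 * EE m := by
  have hz : ∫ t in (0:ℝ)..(π/2), (2 * Real.sin t ^ 2 - 1) = 0 := by
    rw [intervalIntegral.integral_sub (by apply Continuous.intervalIntegrable; fun_prop)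
      (by simp), intervalIntegral.integral_const_mul, integral_sin_sq]
    simp
    ring
  set c := √(1 - m / 2) with hc
  have hc0 : 0 < c := Real.sqrt_pos.2 (by linarith)
  have hc2 : c ^ 2 = 1 - m / 2 := Real.sq_sqrt (by linarith)
  have hcont : Continuous fun t => (2 - m) * (1 / √(uu m t)) - 2 * √(uu m t)
      - m / c * (2 * Real.sin t ^ 2 - 1) := by
    have := inv_cont hm
    have := sqrt_uu_cont m
    fun_prop
  have e : (2 - m) * KK m - 2 * EE m = ∫ t in (0:ℝ)..(π/2), ((2 - m) * (1 / √(uu m t))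
      - 2 * √(uu m t) - m / c * (2 * Real.sin t ^ 2 - 1)) := by
    have i1 := ((inv_cont hm).const_mul (2 - m)).intervalIntegrable (μ := MeasureTheory.volume) 0 (π/2)
    have i2 := ((sqrt_uu_cont m).const_mul 2).intervalIntegrable (μ := MeasureTheory.volume) 0 (π/2)
    rw [intervalIntegral.integral_sub (i1.sub i2)
      (by apply Continuous.intervalIntegrable; fun_prop),
      intervalIntegral.integral_sub i1 i2, intervalIntegral.integral_const_mul,
      intervalIntegral.integral_const_mul, intervalIntegral.integral_const_mul, hz]
    simp [KK, EE]
  rw [e]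
  have key : ∀ t, (2 - m) * (1 / √(uu m t)) - 2 * √(uu m t) - m / c * (2 * Real.sin t ^ 2 - 1)
      = 2 * (c - √(uu m t)) ^ 2 * (c + √(uu m t)) / (c * √(uu m t)) := by
    intro t
    have hp := sqrt_uu_pos hm t
    have hs : √(uu m t) ^ 2 = 1 - m * Real.sin t ^ 2 := Real.sq_sqrt (uu_pos hm t).le
    have h1 : 2 - m = 2 * c ^ 2 := by linarith
    have h2 : m * (2 * Real.sin t ^ 2 - 1) = 2 * (c ^ 2 - √(uu m t) ^ 2) := by
      rw [hs, hc2]; ring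
    rw [div_mul_eq_mul_div, h2, h1]
    field_simp
    ring
  apply intervalIntegral.integral_pos half_pi_pos' hcont.continuousOn
  · intro t _
    have hp := sqrt_uu_pos hm t
    rw [key]; positivity
  · refine ⟨0, ⟨le_rfl, half_pi_pos'.le⟩, ?_⟩
    rw [key]
    have : √(uu m 0) = 1 := by simp [uu]
    rw [this]
    have : c - 1 ≠ 0 := by
      intro h
      have : c = 1 := by linarith
      rw [this] at hc2; linarith
    positivity

lemma iota_six_pos {m : ℝ} (h0 : 0 < m) (hm : m < 1) : 0 < EE m - (1 - m) * KK m := by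
  unfold KK EE
  have i1 := (inv_cont hm).const_mul (1 - m)
  rw [← intervalIntegral.integral_const_mul, ← intervalIntegral.integral_sub
    ((sqrt_uu_cont m).intervalIntegrable _ _) (i1.intervalIntegrable _ _)]
  have key : ∀ t, √(uu m t) - (1 - m) * (1 / √(uu m t)) = m * Real.cos t ^ 2 / √(uu m t) := by
    intro t
    have hp := sqrt_uu_pos hm t
    have hs : √(uu m t) ^ 2 = 1 - m * Real.sin t ^ 2 := Real.sq_sqrt (uu_pos hm t).le
    field_simp
    rw [hs, Real.cos_sq']; ring
  apply intervalIntegral.integral_pos half_pi_pos' ((sqrt_uu_cont m).fun_sub i1).continuousOn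
  · intro t _
    have hp := sqrt_uu_pos hm t
    rw [key]; positivity
  · refine ⟨0, ⟨le_rfl, half_pi_pos'.le⟩, ?_⟩
    have hp := sqrt_uu_pos hm 0
    rw [key, Real.cos_zero]; positivity

/-- For every `k ∈ (0,1)` the quantities `ι₄(k)`, `ι₅(k)`, `ι₆(k)` are strictly positive. -/
theorem iota₄_iota₅_iota₆_pos :
    ∀ k ∈ Set.Ioo (0:ℝ) 1, 0 < ι₄ k ∧ 0 < ι₅ k ∧ 0 < ι₆ k := by
  intro k hk
  have h0 : 0 < k ^ 2 := pow_pos hk.1 2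
  have h1 : k ^ 2 < 1 := by nlinarith [hk.1, hk.2]
  exact ⟨iota_four_pos h0 h1, JJ_pos h0 h1, iota_six_pos h0 h1⟩
end

section
/- Define, for k ∈ (0,1), Y(k) = −√(ι₄(k)/√(1 − k²)) and W(k) = (k⁴K(k) − ι₄(k)(8 − 7k²))/(12√(ι₄(k)³(1 − k²)^{3/2})), where ι₄(k) = (2 − k²)K(k) − 2E(k). Then Y is strictly decreasing on (0,1) and W is strictly increasing on (0,1); moreover Y(k) → 0 and W(k) → 1/√π as k → 0⁺, while Y(k) → −∞ and W(k) → +∞ as k → 1⁻. Consequently the parametric curve {(Y(k), W(k)) : k ∈ (0,1)} is the graph of a function W = W_conj^{22+}(Y) strictly decreasing from +∞ to 1/√π on Y ∈ (−∞, 0). -/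
open Real Set Filter Topology

noncomputable def Y22p (k : ℝ) : ℝ := -Real.sqrt (ι₄ k / Real.sqrt (1 - k^2))

noncomputable def W22p (k : ℝ) : ℝ :=
  (k^4 * K k - ι₄ k * (8 - 7 * k^2)) /
    (12 * Real.sqrt ((ι₄ k)^3 * (1 - k^2) ^ ((3:ℝ)/2)))

lemma delta_pos {m : ℝ} (hm : m < 1) (t : ℝ) : 0 < 1 - m * sin t ^ 2 := by
  have h1 : sin t ^ 2 ≤ 1 := sin_sq_le_one t
  have h0 : 0 ≤ sin t ^ 2 := sq_nonneg _
  by_cases h : m ≤ 0 <;> nlinarith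

lemma delta_ge {m r : ℝ} (hm : m < r) (hr : 0 < r) (t : ℝ) : 1 - r ≤ 1 - m * sin t ^ 2 := by
  have h1 : sin t ^ 2 ≤ 1 := sin_sq_le_one t
  have h0 : 0 ≤ sin t ^ 2 := sq_nonneg _
  nlinarith

noncomputable def Km (m : ℝ) : ℝ := ∫ t in (0:ℝ)..(π/2), 1 / √(1 - m * sin t ^ 2)
noncomputable def Em (m : ℝ) : ℝ := ∫ t in (0:ℝ)..(π/2), √(1 - m * sin t ^ 2)
noncomputable def Km' (m : ℝ) : ℝ :=
  ∫ t in (0:ℝ)..(π/2), sin t ^ 2 / (2 * (1 - m * sin t ^ 2) * √(1 - m * sin t ^ 2))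
noncomputable def Em' (m : ℝ) : ℝ :=
  ∫ t in (0:ℝ)..(π/2), - sin t ^ 2 / (2 * √(1 - m * sin t ^ 2))

lemma contK {m : ℝ} (hm : m < 1) : Continuous fun t : ℝ => 1 / √(1 - m * sin t ^ 2) := by
  apply Continuous.div (by fun_prop) (by fun_prop)
  intro t; exact (sqrt_pos.2 (delta_pos hm t)).ne'

lemma contE (m : ℝ) : Continuous fun t : ℝ => √(1 - m * sin t ^ 2) := by fun_prop

lemma contK' {m : ℝ} (hm : m < 1) : Continuous fun t : ℝ =>
    sin t ^ 2 / (2 * (1 - m * sin t ^ 2) * √(1 - m * sin t ^ 2)) := by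
  apply Continuous.div (by fun_prop) (by fun_prop)
  intro t
  have := delta_pos hm t
  positivity

lemma contE' {m : ℝ} (hm : m < 1) : Continuous fun t : ℝ =>
    - sin t ^ 2 / (2 * √(1 - m * sin t ^ 2)) := by
  apply Continuous.div (by fun_prop) (by fun_prop)
  intro t
  have := delta_pos hm t
  positivity

lemma hasDerivAt_sqrt_delta {m : ℝ} (hm : m < 1) (t : ℝ) :
    HasDerivAt (fun x => √(1 - x * sin t ^ 2)) (- sin t ^ 2 / (2 * √(1 - m * sin t ^ 2))) m := by
  have h : HasDerivAt (fun x => 1 - x * sin t ^ 2) (- sin t ^ 2) m := by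
    simpa using ((hasDerivAt_id m).mul_const (sin t ^ 2)).const_sub 1
  exact h.sqrt (delta_pos hm t).ne'

lemma hasDerivAt_inv_sqrt_delta {m : ℝ} (hm : m < 1) (t : ℝ) :
    HasDerivAt (fun x => 1 / √(1 - x * sin t ^ 2))
      (sin t ^ 2 / (2 * (1 - m * sin t ^ 2) * √(1 - m * sin t ^ 2))) m := by
  have hp := delta_pos hm t
  have h := (hasDerivAt_sqrt_delta hm t).inv (sqrt_pos.2 hp).ne'
  have h2 : (fun x => 1 / √(1 - x * sin t ^ 2)) = (fun x => √(1 - x * sin t ^ 2))⁻¹ := by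
    ext x; simp
  rw [h2]
  refine h.congr_deriv ?_
  rw [sq_sqrt hp.le]
  have := (sqrt_pos.2 hp).ne'
  field_simp

lemma hasDerivAt_Km {m : ℝ} (hm : m ∈ Ioo (-1:ℝ) 1) : HasDerivAt Km (Km' m) m := by
  obtain ⟨h1, h2⟩ := hm
  set r : ℝ := (1 + m) / 2 with hr
  have hr0 : 0 < r := by rw [hr]; linarith
  have hr1 : r < 1 := by rw [hr]; linarith
  have hmr : m < r := by rw [hr]; linarith
  refine (intervalIntegral.hasDerivAt_integral_of_dominated_loc_of_deriv_le
    (F := fun m t => 1 / √(1 - m * sin t ^ 2))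
    (F' := fun m t => sin t ^ 2 / (2 * (1 - m * sin t ^ 2) * √(1 - m * sin t ^ 2)))
    (s := Iio r) (bound := fun _ => 1 / (2 * (1 - r) * √(1 - r))) (Iio_mem_nhds hmr) ?_ ?_ ?_ ?_ ?_ ?_).2
  · filter_upwards [Iio_mem_nhds h2] with x hx
    exact (contK hx).aestronglyMeasurable
  · exact (contK h2).intervalIntegrable _ _
  · exact (contK' h2).aestronglyMeasurable
  · refine Eventually.of_forall fun t _ x hx => ?_
    have h3 := delta_ge hx hr0 t
    have h4 : 0 < 1 - r := by linarith
    have h5 : 0 < 1 - x * sin t ^ 2 := by linarith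
    rw [norm_of_nonneg (by positivity)]
    have := sin_sq_le_one t
    gcongr
  · exact intervalIntegrable_const
  · refine Eventually.of_forall fun t _ x hx => ?_
    exact hasDerivAt_inv_sqrt_delta (lt_trans hx hr1) t

lemma hasDerivAt_Em {m : ℝ} (hm : m ∈ Ioo (-1:ℝ) 1) : HasDerivAt Em (Em' m) m := by
  obtain ⟨h1, h2⟩ := hm
  set r : ℝ := (1 + m) / 2 with hr
  have hr0 : 0 < r := by rw [hr]; linarith
  have hr1 : r < 1 := by rw [hr]; linarith
  have hmr : m < r := by rw [hr]; linarith
  refine (intervalIntegral.hasDerivAt_integral_of_dominated_loc_of_deriv_le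
    (F := fun m t => √(1 - m * sin t ^ 2))
    (F' := fun m t => - sin t ^ 2 / (2 * √(1 - m * sin t ^ 2)))
    (s := Iio r) (bound := fun _ => 1 / (2 * √(1 - r))) (Iio_mem_nhds hmr) ?_ ?_ ?_ ?_ ?_ ?_).2
  · filter_upwards [Iio_mem_nhds h2] with x hx
    exact (contE x).aestronglyMeasurable
  · exact (contE m).intervalIntegrable _ _
  · exact (contE' h2).aestronglyMeasurable
  · refine Eventually.of_forall fun t _ x hx => ?_
    have h3 := delta_ge hx hr0 t
    have h4 : 0 < 1 - r := by linarith
    have h5 : 0 < 1 - x * sin t ^ 2 := by linarith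
    rw [neg_div, norm_neg, norm_of_nonneg (by positivity)]
    have := sin_sq_le_one t
    gcongr
  · exact intervalIntegrable_const
  · refine Eventually.of_forall fun t _ x hx => ?_
    exact hasDerivAt_sqrt_delta (lt_trans hx hr1) t

noncomputable def Td (m t : ℝ) : ℝ :=
  ((cos t ^ 2 - sin t ^ 2) * (1 - m * sin t ^ 2) + m * sin t ^ 2 * cos t ^ 2) /
    ((1 - m * sin t ^ 2) * √(1 - m * sin t ^ 2))

lemma contTd {m : ℝ} (hm : m < 1) : Continuous (Td m) := by
  unfold Td
  apply Continuous.div (by fun_prop) (by fun_prop)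
  intro t
  have := delta_pos hm t
  positivity

lemma integral_Td {m : ℝ} (hm : m < 1) : ∫ t in (0:ℝ)..(π/2), Td m t = 0 := by
  have h : ∀ t : ℝ, HasDerivAt (fun t => sin t * cos t / √(1 - m * sin t ^ 2)) (Td m t) t := by
    intro t
    have hp := delta_pos hm t
    have h1 : HasDerivAt (fun t => 1 - m * sin t ^ 2) (-(m * (2 * sin t * cos t))) t := by
      have := (((hasDerivAt_sin t).pow 2).const_mul m).const_sub 1
      refine this.congr_deriv ?_
      simp
    have h2 := ((hasDerivAt_sin t).mul (hasDerivAt_cos t)).div (h1.sqrt hp.ne')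
      (sqrt_pos.2 hp).ne'
    refine h2.congr_deriv ?_
    unfold Td
    have h3 := sqrt_pos.2 hp
    have h4 := sq_sqrt hp.le
    simp only [Pi.mul_apply]
    generalize √(1 - m * sin t ^ 2) = q at *
    rw [← h4]
    field_simp
    ring
  rw [intervalIntegral.integral_eq_sub_of_hasDerivAt (fun t _ => h t)
    ((contTd hm).intervalIntegrable _ _)]
  simp

noncomputable def Bm (m : ℝ) : ℝ := Em m - (1 - m) * Km m
noncomputable def Am (m : ℝ) : ℝ := (2 - m) * Km m - 2 * Em m

lemma Am_add (m : ℝ) : Am m + 2 * Bm m = m * Km m := by unfold Am Bm; ring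

lemma B_identity {m : ℝ} (hm : m < 1) : Em' m + Km m - (1 - m) * Km' m = Km m / 2 := by
  have iK := (contK hm).intervalIntegrable (μ := MeasureTheory.volume) 0 (π/2)
  have iK' := (contK' hm).intervalIntegrable (μ := MeasureTheory.volume) 0 (π/2)
  have iE' := (contE' hm).intervalIntegrable (μ := MeasureTheory.volume) 0 (π/2)
  have h0 := integral_Td hm
  have h : ∫ t in (0:ℝ)..(π/2), Td m t = 2 * Em' m + Km m - 2 * (1 - m) * Km' m := by
    unfold Em' Km Km'
    rw [← intervalIntegral.integral_const_mul, ← intervalIntegral.integral_const_mul,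
      ← intervalIntegral.integral_add (iE'.const_mul _) iK,
      ← intervalIntegral.integral_sub ((iE'.const_mul _).add iK) (iK'.const_mul _)]
    congr 1; ext t
    unfold Td
    have hp := delta_pos hm t
    have h3 := sqrt_pos.2 hp
    have h5 : m * sin t ^ 2 = 1 - (1 - m * sin t ^ 2) := by ring
    rw [cos_sq']
    generalize √(1 - m * sin t ^ 2) = q at *
    generalize hd : 1 - m * sin t ^ 2 = d at *
    field_simp
    subst hd
    ring
  linarith

lemma A_identity {m : ℝ} (hm : m < 1) :
    2 * (1 - m) * (-Km m + (2 - m) * Km' m - 2 * Em' m) = Bm m := by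
  have iK := (contK hm).intervalIntegrable (μ := MeasureTheory.volume) 0 (π/2)
  have iE := (contE m).intervalIntegrable (μ := MeasureTheory.volume) 0 (π/2)
  have h0 := B_identity hm
  have h2 : m * (2 * Em' m) = Em m - Km m := by
    unfold Em' Em Km
    rw [← intervalIntegral.integral_sub iE iK, ← intervalIntegral.integral_const_mul,
      ← intervalIntegral.integral_const_mul]
    congr 1; ext t
    have hp := delta_pos hm t
    have h3 := sqrt_pos.2 hp
    have h4 := sq_sqrt hp.le
    field_simp
    rw [h4]; ring
  unfold Bm
  linear_combination (2*(2-m)) * (-1) * h0 + h2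

lemma hasDerivAt_Bm {m : ℝ} (hm : m ∈ Ioo (-1:ℝ) 1) : HasDerivAt Bm (Km m / 2) m := by
  have h := (hasDerivAt_Em hm).sub (((hasDerivAt_id m).const_sub 1).mul (hasDerivAt_Km hm))
  refine h.congr_deriv ?_
  simp only [id]
  rw [← B_identity hm.2]
  ring

lemma hasDerivAt_Am {m : ℝ} (hm : m ∈ Ioo (-1:ℝ) 1) :
    HasDerivAt Am (Bm m / (2 * (1 - m))) m := by
  have h := (((hasDerivAt_id m).const_sub 2).mul (hasDerivAt_Km hm)).sub
    ((hasDerivAt_Em hm).const_mul 2)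
  refine h.congr_deriv ?_
  have h1 : 1 - m ≠ 0 := by linarith [hm.2]
  rw [← A_identity hm.2]
  simp only [id]
  field_simp

lemma Km_zero : Km 0 = π / 2 := by simp [Km]
lemma Em_zero : Em 0 = π / 2 := by simp [Em]
lemma Am_zero : Am 0 = 0 := by simp [Am, Km_zero, Em_zero]
lemma Bm_zero : Bm 0 = 0 := by simp [Bm, Km_zero, Em_zero]

lemma Km_pos {m : ℝ} (hm : m < 1) : 0 < Km m := by
  apply intervalIntegral.intervalIntegral_pos_of_pos ((contK hm).intervalIntegrable _ _)
  · intro t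
    have hp := delta_pos hm t
    positivity
  · positivity

lemma Em_le {m : ℝ} (hm : 0 ≤ m) : Em m ≤ π / 2 := by
  have h : Em m ≤ ∫ t in (0:ℝ)..(π/2), (1:ℝ) := by
    apply intervalIntegral.integral_mono (by positivity) ((contE m).intervalIntegrable _ _)
      intervalIntegrable_const
    intro t
    show √(1 - m * sin t ^ 2) ≤ 1
    rw [sqrt_le_one]
    nlinarith [sq_nonneg (sin t)]
  simpa using h

/-- Monotonicity from a positive derivative, on `(0,1)`. -/
lemma mono_aux {f f' : ℝ → ℝ} (hf : ∀ m ∈ Ioo (0:ℝ) 1, HasDerivAt f (f' m) m)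
    (hp : ∀ m ∈ Ioo (0:ℝ) 1, 0 < f' m) : StrictMonoOn f (Ioo 0 1) := by
  apply strictMonoOn_of_deriv_pos (convex_Ioo 0 1)
  · intro x hx; exact (hf x hx).continuousAt.continuousWithinAt
  · intro x hx
    rw [interior_Ioo] at hx
    rw [(hf x hx).deriv]; exact hp x hx

lemma pos_of_mono_tendsto {f : ℝ → ℝ} (hf : StrictMonoOn f (Ioo 0 1))
    (h0 : Tendsto f (𝓝[>] 0) (𝓝 0)) {m : ℝ} (hm : m ∈ Ioo (0:ℝ) 1) : 0 < f m := by
  have hm2 : m / 2 ∈ Ioo (0:ℝ) 1 := ⟨by linarith [hm.1], by linarith [hm.1, hm.2]⟩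
  have h1 : f (m/2) < f m := hf hm2 hm (by linarith [hm.1])
  have h2 : 0 ≤ f (m/2) := by
    apply le_of_tendsto h0
    filter_upwards [Ioo_mem_nhdsGT hm2.1] with x hx
    exact (hf ⟨hx.1, hx.2.trans hm2.2⟩ hm2 hx.2).le
  linarith

lemma pos_aux {f f' : ℝ → ℝ} (hf : ∀ m ∈ Ioo (0:ℝ) 1, HasDerivAt f (f' m) m)
    (hc : ContinuousAt f 0) (h0 : f 0 = 0)
    (hp : ∀ m ∈ Ioo (0:ℝ) 1, 0 < f' m) {m : ℝ} (hm : m ∈ Ioo (0:ℝ) 1) : 0 < f m := by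
  refine pos_of_mono_tendsto (mono_aux hf hp) ?_ hm
  have := hc.tendsto
  rw [h0] at this
  exact this.mono_left nhdsWithin_le_nhds

lemma tendsto_div_id {f : ℝ → ℝ} {a : ℝ} (h : HasDerivAt f a 0) (h0 : f 0 = 0) :
    Tendsto (fun x => f x / x) (𝓝[>] 0) (𝓝 a) := by
  have h1 := hasDerivAt_iff_tendsto_slope.1 h
  have h2 := h1.mono_left (nhdsWithin_mono (0:ℝ) (t := {0}ᶜ) (s := Ioi 0)
    (fun x hx => ne_of_gt hx))
  refine h2.congr fun x => ?_
  rw [slope_def_field, h0]; simp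

lemma pos_aux_div {f f' : ℝ → ℝ} (hf : ∀ m ∈ Ioo (0:ℝ) 1, HasDerivAt f (f' m) m)
    (hd : HasDerivAt f 0 0) (h0 : f 0 = 0)
    (hp : ∀ m ∈ Ioo (0:ℝ) 1, 0 < m * f' m - f m) {m : ℝ} (hm : m ∈ Ioo (0:ℝ) 1) : 0 < f m := by
  have h1 : ∀ m ∈ Ioo (0:ℝ) 1, HasDerivAt (fun x => f x / x) ((m * f' m - f m) / m ^ 2) m := by
    intro m hm
    refine ((hf m hm).div (hasDerivAt_id m) hm.1.ne').congr_deriv ?_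
    simp only [id]; ring
  have h2 := pos_of_mono_tendsto (mono_aux h1 fun m hm => div_pos (hp m hm) (by
    have := hm.1; positivity)) (tendsto_div_id hd h0) hm
  exact (div_pos_iff_of_pos_right hm.1).1 h2

lemma sub01 {m : ℝ} (hm : m ∈ Ioo (0:ℝ) 1) : m ∈ Ioo (-1:ℝ) 1 := ⟨by linarith [hm.1], hm.2⟩
lemma zero_mem' : (0:ℝ) ∈ Ioo (-1:ℝ) 1 := by norm_num

lemma Bm_pos {m : ℝ} (hm : m ∈ Ioo (0:ℝ) 1) : 0 < Bm m :=
  pos_aux (fun _ h => hasDerivAt_Bm (sub01 h)) (hasDerivAt_Bm zero_mem').continuousAt Bm_zero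
    (fun _ h => by have := Km_pos h.2; positivity) hm

lemma Am'_pos {m : ℝ} (hm : m ∈ Ioo (0:ℝ) 1) : 0 < Bm m / (2 * (1 - m)) := by
  have := Bm_pos hm
  have : 0 < 1 - m := by linarith [hm.2]
  positivity

lemma Am_pos {m : ℝ} (hm : m ∈ Ioo (0:ℝ) 1) : 0 < Am m :=
  pos_aux (fun _ h => hasDerivAt_Am (sub01 h)) (hasDerivAt_Am zero_mem').continuousAt Am_zero
    (fun _ h => Am'_pos h) hm

lemma Am_mono : StrictMonoOn Am (Ioo 0 1) :=
  mono_aux (fun _ h => hasDerivAt_Am (sub01 h)) (fun _ h => Am'_pos h)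

noncomputable def Dm (m : ℝ) : ℝ := m * Bm m - 4 * (1 - m) * Am m

lemma hasDerivAt_Dm {m : ℝ} (hm : m ∈ Ioo (-1:ℝ) 1) : HasDerivAt Dm (9 / 2 * Am m) m := by
  have h := ((hasDerivAt_id m).mul (hasDerivAt_Bm hm)).sub
    ((((hasDerivAt_id m).const_sub 1).const_mul 4).mul (hasDerivAt_Am hm))
  refine h.congr_deriv ?_
  have h1 : 1 - m ≠ 0 := by linarith [hm.2]
  have h2 := Am_add m
  simp only [id]
  field_simp
  linear_combination (-1) * h2

lemma Dm_zero : Dm 0 = 0 := by simp [Dm, Am_zero]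

lemma Dm'_pos {m : ℝ} (hm : m ∈ Ioo (0:ℝ) 1) : 0 < 9 / 2 * Am m := by
  have := Am_pos hm
  positivity

lemma Dm_pos {m : ℝ} (hm : m ∈ Ioo (0:ℝ) 1) : 0 < Dm m :=
  pos_aux (fun _ h => hasDerivAt_Dm (sub01 h)) (hasDerivAt_Dm zero_mem').continuousAt Dm_zero
    (fun _ h => Dm'_pos h) hm

lemma Dm_mono : StrictMonoOn Dm (Ioo 0 1) :=
  mono_aux (fun _ h => hasDerivAt_Dm (sub01 h)) (fun _ h => Dm'_pos h)

noncomputable def Gm (m : ℝ) : ℝ :=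
  m * Bm m ^ 2 - 4 * (1 - m) * (Am m * Bm m) - 3 * (1 - m) * Am m ^ 2

lemma hasDerivAt_Gm {m : ℝ} (hm : m ∈ Ioo (-1:ℝ) 1) :
    HasDerivAt Gm (Bm m ^ 2 + m * (Bm m * Km m) + 4 * Am m * Bm m - 2 * Bm m ^ 2
      - 2 * (1 - m) * Am m * Km m + 3 * Am m ^ 2 - 3 * Am m * Bm m) m := by
  have hA := hasDerivAt_Am hm
  have hB := hasDerivAt_Bm hm
  have hI := (hasDerivAt_id m)
  have h := ((hI.mul (hB.pow 2)).sub (((hI.const_sub 1).const_mul 4).mul (hA.mul hB))).sub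
    (((hI.const_sub 1).const_mul 3).mul (hA.pow 2))
  refine h.congr_deriv ?_
  have h1 : 1 - m ≠ 0 := by linarith [hm.2]
  simp
  field_simp
  ring

lemma Gm_pos {m : ℝ} (hm : m ∈ Ioo (0:ℝ) 1) : 0 < Gm m := by
  refine pos_aux_div (fun _ h => hasDerivAt_Gm (sub01 h)) ?_ ?_ ?_ hm
  · refine (hasDerivAt_Gm zero_mem').congr_deriv ?_
    simp [Am_zero, Bm_zero]
  · simp [Gm, Am_zero, Bm_zero]
  · intro m hm
    have hA := Am_pos hm
    have hB := Bm_pos hm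
    have hm0 := hm.1
    have h2 := Am_add m
    have : 0 < 2 * m * Am m * Bm m + (1 + 2 * m) * Am m ^ 2 := by positivity
    refine this.trans_eq ?_
    unfold Gm
    linear_combination (m * Bm m - 2 * (1 - m) * Am m) * h2

noncomputable def Fm (m : ℝ) : ℝ :=
  2 * (1 - m) * Am m ^ 2 + (4 - 3 * m) * (Am m * Bm m) - m * Bm m ^ 2

lemma hasDerivAt_Fm {m : ℝ} (hm : m ∈ Ioo (-1:ℝ) 1) :
    HasDerivAt Fm (-2 * Am m ^ 2 + 2 * Am m * Bm m - 3 * Am m * Bm m +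
      (4 - 3 * m) * (Bm m ^ 2 / (2 * (1 - m)) + Am m * Km m / 2) - Bm m ^ 2
      - m * (Bm m * Km m)) m := by
  have hA := hasDerivAt_Am hm
  have hB := hasDerivAt_Bm hm
  have hI := (hasDerivAt_id m)
  have h := ((((hI.const_sub 1).const_mul 2).mul (hA.pow 2)).add
    (((hI.const_mul 3).const_sub 4).mul (hA.mul hB))).sub (hI.mul (hB.pow 2))
  refine h.congr_deriv ?_
  have h1 : 1 - m ≠ 0 := by linarith [hm.2]
  simp
  field_simp
  ring

lemma Fm_pos {m : ℝ} (hm : m ∈ Ioo (0:ℝ) 1) : 0 < Fm m := by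
  refine pos_aux_div (fun _ h => hasDerivAt_Fm (sub01 h)) ?_ ?_ ?_ hm
  · refine (hasDerivAt_Fm zero_mem').congr_deriv ?_
    simp [Am_zero, Bm_zero]
  · simp [Fm, Am_zero, Bm_zero]
  · intro m hm
    have hG := Gm_pos hm
    have hm0 := hm.1
    have h1 : 0 < 1 - m := by linarith [hm.2]
    have h2 := Am_add m
    have : 0 < m * Gm m / (2 * (1 - m)) := by positivity
    refine this.trans_eq ?_
    unfold Gm Fm
    field_simp
    linear_combination (1 - m) * ((4 - 3 * m) * Am m - 2 * m * Bm m) * h2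

noncomputable def Vm (m : ℝ) : ℝ := Dm m ^ 4 / (Am m ^ 6 * (1 - m) ^ 3)

lemma Vm_pos {m : ℝ} (hm : m ∈ Ioo (0:ℝ) 1) : 0 < Vm m := by
  have := Am_pos hm
  have := Dm_pos hm
  have : 0 < 1 - m := by linarith [hm.2]
  unfold Vm
  positivity

lemma Vm_mono : StrictMonoOn Vm (Ioo 0 1) := by
  apply mono_aux (f' := fun m => 3 * Dm m ^ 3 * Fm m / (Am m ^ 7 * (1 - m) ^ 4))
  · intro m hm
    have hA := Am_pos hm
    have hD := Dm_pos hm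
    have h1 : 0 < 1 - m := by linarith [hm.2]
    have h := ((hasDerivAt_Dm (sub01 hm)).pow 4).div
      (((hasDerivAt_Am (sub01 hm)).pow 6).mul (((hasDerivAt_id m).const_sub 1).pow 3))
      (by simp only [Pi.mul_apply, Pi.pow_apply, id]; positivity)
    refine h.congr_deriv ?_
    simp
    field_simp
    unfold Dm Fm
    ring
  · intro m hm
    have := Am_pos hm
    have := Dm_pos hm
    have := Fm_pos hm
    have : 0 < 1 - m := by linarith [hm.2]
    positivity

lemma tendsto_A_div : Tendsto (fun x => Am x / x ^ 2) (𝓝[>] 0) (𝓝 (π / 16)) := by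
  have hnh : ∀ᶠ x in 𝓝[>] (0:ℝ), x ∈ Ioo (0:ℝ) 1 := Ioo_mem_nhdsGT one_pos
  apply HasDerivAt.lhopital_zero_nhdsGT (f' := fun x => Bm x / (2 * (1 - x)))
    (g' := fun x => 2 * x)
  · filter_upwards [hnh] with x hx using hasDerivAt_Am (sub01 hx)
  · filter_upwards with x
    simpa using hasDerivAt_pow 2 x
  · filter_upwards [hnh] with x hx
    have := hx.1
    positivity
  · have := (hasDerivAt_Am zero_mem').continuousAt.tendsto
    rw [Am_zero] at this
    exact this.mono_left nhdsWithin_le_nhds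
  · have : Tendsto (fun x : ℝ => x ^ 2) (𝓝 0) (𝓝 (0 ^ 2)) := (continuous_pow 2).tendsto 0
    simp only [ne_eq, OfNat.ofNat_ne_zero, not_false_eq_true, zero_pow] at this
    exact this.mono_left nhdsWithin_le_nhds
  · have h1 := tendsto_div_id (hasDerivAt_Bm zero_mem') Bm_zero
    have h2 : Tendsto (fun x : ℝ => 4 * (1 - x)) (𝓝[>] 0) (𝓝 (4 * (1 - 0))) :=
      ((by fun_prop : Continuous fun x : ℝ => 4 * (1 - x)).tendsto 0).mono_left nhdsWithin_le_nhds
    have h3 := h1.div h2 (by norm_num)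
    rw [Km_zero] at h3
    have h4 : π / 2 / 2 / (4 * (1 - 0)) = π / 16 := by ring
    rw [h4] at h3
    refine h3.congr' ?_
    filter_upwards [hnh] with x hx
    have := hx.1
    have : 1 - x ≠ 0 := by linarith [hx.2]
    simp only [Pi.div_apply]
    field_simp
    ring

lemma tendsto_D_div : Tendsto (fun x => Dm x / x ^ 3) (𝓝[>] 0) (𝓝 (3 * π / 32)) := by
  have hnh : ∀ᶠ x in 𝓝[>] (0:ℝ), x ∈ Ioo (0:ℝ) 1 := Ioo_mem_nhdsGT one_pos
  apply HasDerivAt.lhopital_zero_nhdsGT (f' := fun x => 9 / 2 * Am x)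
    (g' := fun x => 3 * x ^ 2)
  · filter_upwards [hnh] with x hx using hasDerivAt_Dm (sub01 hx)
  · filter_upwards with x
    simpa using hasDerivAt_pow 3 x
  · filter_upwards [hnh] with x hx
    have := hx.1
    positivity
  · have := (hasDerivAt_Dm zero_mem').continuousAt.tendsto
    rw [Dm_zero] at this
    exact this.mono_left nhdsWithin_le_nhds
  · have : Tendsto (fun x : ℝ => x ^ 3) (𝓝 0) (𝓝 (0 ^ 3)) := (continuous_pow 3).tendsto 0
    simp only [ne_eq, OfNat.ofNat_ne_zero, not_false_eq_true, zero_pow] at this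
    exact this.mono_left nhdsWithin_le_nhds
  · have h3 := tendsto_A_div.const_mul (3 / 2 : ℝ)
    have h4 : 3 / 2 * (π / 16) = 3 * π / 32 := by ring
    rw [h4] at h3
    refine h3.congr' ?_
    filter_upwards [hnh] with x hx
    have := hx.1
    field_simp
    ring

lemma tendsto_V_zero : Tendsto Vm (𝓝[>] 0) (𝓝 (1296 / π ^ 2)) := by
  have h2 : Tendsto (fun x : ℝ => (1 - x) ^ 3) (𝓝[>] 0) (𝓝 ((1 - 0) ^ 3)) :=
      ((by fun_prop : Continuous fun x : ℝ => (1 - x) ^ 3).tendsto 0).mono_left nhdsWithin_le_nhds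
  have h := (tendsto_D_div.pow 4).div ((tendsto_A_div.pow 6).mul h2)
    (by have := pi_pos; positivity)
  have h4 : (3 * π / 32) ^ 4 / ((π / 16) ^ 6 * (1 - 0) ^ 3) = 1296 / π ^ 2 := by
    have := pi_pos
    field_simp
    norm_num
  rw [h4] at h
  refine h.congr' ?_
  filter_upwards [Ioo_mem_nhdsGT one_pos] with x hx
  have := hx.1
  have : 0 < 1 - x := by linarith [hx.2]
  have := Am_pos hx
  simp only [Pi.div_apply]
  unfold Vm
  field_simp

lemma Bm_le {m : ℝ} (hm : m ∈ Ioo (0:ℝ) 1) : Bm m ≤ π / 2 := by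
  have h1 := Em_le hm.1.le
  have h2 := Km_pos hm.2
  have h3 : 0 < 1 - m := by linarith [hm.2]
  have := mul_pos h3 h2
  unfold Bm
  linarith

lemma Am_le_log {m : ℝ} (hm : m ∈ Ioo (0:ℝ) 1) : Am m < - (π * log (1 - m)) := by
  have hd : ∀ m ∈ Ioo (-1:ℝ) 1, HasDerivAt (fun m => - (π * log (1 - m)) - Am m)
      (π / (1 - m) - Bm m / (2 * (1 - m))) m := by
    intro m hm
    have h1 : 1 - m ≠ 0 := by linarith [hm.2]
    refine ((((((hasDerivAt_id m).const_sub 1).log h1).const_mul π).neg).sub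
      (hasDerivAt_Am hm)).congr_deriv ?_
    simp only [id]
    ring
  have := pos_aux (fun m hm => hd m (sub01 hm)) (hd 0 zero_mem').continuousAt
    (by simp [Am_zero]) ?_ hm
  · linarith
  · intro m hm
    have h1 : 0 < 1 - m := by linarith [hm.2]
    have h2 := Bm_le hm
    have h3 := pi_pos
    have : π / (1 - m) - Bm m / (2 * (1 - m)) = (2 * π - Bm m) / (2 * (1 - m)) := by
      field_simp
    rw [this]
    apply div_pos <;> linarith

lemma tendsto_one_sub : Tendsto (fun m : ℝ => 1 - m) (𝓝[<] 1) (𝓝[>] 0) := by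
  rw [tendsto_nhdsWithin_iff]
  constructor
  · have : Tendsto (fun m : ℝ => 1 - m) (𝓝 1) (𝓝 (1 - 1)) :=
      (by fun_prop : Continuous fun m : ℝ => 1 - m).tendsto 1
    rw [sub_self] at this
    exact this.mono_left nhdsWithin_le_nhds
  · filter_upwards [self_mem_nhdsWithin] with x hx
    simpa using hx

lemma tendsto_AA : Tendsto (fun m => Am m ^ 2 * (1 - m)) (𝓝[<] 1) (𝓝 0) := by
  have h1 := ((tendsto_log_mul_rpow_nhdsGT_zero (r := 1/2) (by norm_num)).comp
    tendsto_one_sub).pow 2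
  have h2 := h1.const_mul (π ^ 2)
  simp only [ne_eq, OfNat.ofNat_ne_zero, not_false_eq_true, zero_pow, mul_zero] at h2
  refine squeeze_zero' ?_ ?_ h2
  · filter_upwards [Ioo_mem_nhdsLT zero_lt_one] with x hx
    have : 0 < 1 - x := by linarith [hx.2]
    positivity
  · filter_upwards [Ioo_mem_nhdsLT zero_lt_one] with x hx
    have hx1 : 0 < 1 - x := by linarith [hx.2]
    have h3 := Am_le_log hx
    have h4 := Am_pos hx
    simp only [Function.comp]
    rw [← sqrt_eq_rpow, mul_pow, sq_sqrt hx1.le]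
    have : Am x ^ 2 ≤ (- (π * log (1 - x))) ^ 2 := by gcongr
    calc _ ≤ (- (π * log (1 - x))) ^ 2 * (1 - x) := by gcongr
      _ = _ := by ring

lemma tendsto_V_one : Tendsto Vm (𝓝[<] 1) atTop := by
  have hh : (1/2 : ℝ) ∈ Ioo (0:ℝ) 1 := by norm_num
  have h1 : Tendsto (fun m => Am m ^ 6 * (1 - m) ^ 3) (𝓝[<] 1) (𝓝[>] 0) := by
    rw [tendsto_nhdsWithin_iff]
    constructor
    · have := tendsto_AA.pow 3
      simp only [ne_eq, OfNat.ofNat_ne_zero, not_false_eq_true, zero_pow] at this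
      refine this.congr fun x => ?_
      ring
    · filter_upwards [Ioo_mem_nhdsLT zero_lt_one] with x hx
      have : 0 < 1 - x := by linarith [hx.2]
      have := Am_pos hx
      exact mem_Ioi.2 (by positivity)
  have h2 := (h1.inv_tendsto_nhdsGT_zero).const_mul_atTop (pow_pos (Dm_pos hh) 4)
  refine tendsto_atTop_mono' _ ?_ h2
  filter_upwards [Ioo_mem_nhdsLT hh.2] with x hx
  have hx' : x ∈ Ioo (0:ℝ) 1 := ⟨hh.1.trans hx.1, hx.2⟩
  have : 0 < 1 - x := by linarith [hx.2]
  have := Am_pos hx'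
  have h3 := Dm_pos hh
  have h4 := Dm_mono hh hx' hx.1
  unfold Vm
  rw [div_eq_mul_inv (Dm x ^ 4)]
  exact mul_le_mul_of_nonneg_right (pow_le_pow_left₀ h3.le h4.le 4) (by simp only [Pi.inv_apply]; positivity)

lemma sq_mem {k : ℝ} (hk : k ∈ Ioo (0:ℝ) 1) : k ^ 2 ∈ Ioo (0:ℝ) 1 := by
  obtain ⟨h0, h1⟩ := hk
  exact ⟨by positivity, by nlinarith⟩

lemma iota_eq (k : ℝ) : ι₄ k = Am (k ^ 2) := rfl

lemma W_eq {k : ℝ} (hk : k ∈ Ioo (0:ℝ) 1) : W22p k = √(√(Vm (k ^ 2))) / 6 := by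
  have hm := sq_mem hk
  have hA := Am_pos hm
  have hD := Dm_pos hm
  have h1 : 0 < 1 - k ^ 2 := by linarith [hm.2]
  have hK : K k = Km (k ^ 2) := rfl
  have hadd := Am_add (k ^ 2)
  have hN : k ^ 4 * K k - ι₄ k * (8 - 7 * k ^ 2) = 2 * Dm (k ^ 2) := by
    rw [iota_eq, hK]
    unfold Dm
    linear_combination (-k ^ 2) * hadd
  unfold W22p
  rw [hN, iota_eq]
  generalize k ^ 2 = m at *
  have hR : 0 < (1 - m) ^ ((3:ℝ)/2) := rpow_pos_of_pos h1 _
  have hR2 : ((1 - m) ^ ((3:ℝ)/2)) ^ 2 = (1 - m) ^ 3 := by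
    rw [← rpow_natCast, ← rpow_mul h1.le, ← rpow_natCast]
    norm_num
  generalize (1 - m) ^ ((3:ℝ)/2) = R at *
  have hV : Vm m = ((Dm m / √(Am m ^ 3 * R)) ^ 2) ^ 2 := by
    unfold Vm
    rw [div_pow, div_pow, sq_sqrt (by positivity), ← hR2]
    ring
  rw [hV, sqrt_sq (by positivity), sqrt_sq (by positivity)]
  field_simp
  ring

lemma tendsto_sq_zero : Tendsto (fun k : ℝ => k ^ 2) (𝓝[>] 0) (𝓝[>] 0) := by
  rw [tendsto_nhdsWithin_iff]
  constructor
  · have : Tendsto (fun x : ℝ => x ^ 2) (𝓝 0) (𝓝 (0 ^ 2)) := (continuous_pow 2).tendsto 0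
    simp only [ne_eq, OfNat.ofNat_ne_zero, not_false_eq_true, zero_pow] at this
    exact this.mono_left nhdsWithin_le_nhds
  · filter_upwards [self_mem_nhdsWithin] with x hx
    have : 0 < x := hx
    exact mem_Ioi.2 (by positivity)

lemma tendsto_sq_one : Tendsto (fun k : ℝ => k ^ 2) (𝓝[<] 1) (𝓝[<] 1) := by
  rw [tendsto_nhdsWithin_iff]
  constructor
  · have : Tendsto (fun x : ℝ => x ^ 2) (𝓝 1) (𝓝 (1 ^ 2)) := (continuous_pow 2).tendsto 1
    rw [one_pow] at this
    exact this.mono_left nhdsWithin_le_nhds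
  · filter_upwards [Ioo_mem_nhdsLT zero_lt_one] with x hx
    exact (sq_mem hx).2

lemma W_mono : StrictMonoOn W22p (Ioo 0 1) := by
  intro a ha b hb hab
  rw [W_eq ha, W_eq hb]
  have h : Vm (a ^ 2) < Vm (b ^ 2) := Vm_mono (sq_mem ha) (sq_mem hb)
    (by have := ha.1; gcongr)
  have h1 := Vm_pos (sq_mem ha)
  have h2 : √(Vm (a ^ 2)) < √(Vm (b ^ 2)) := sqrt_lt_sqrt h1.le h
  have h3 : √(√(Vm (a ^ 2))) < √(√(Vm (b ^ 2))) := sqrt_lt_sqrt (sqrt_nonneg _) h2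
  linarith

lemma W_zero : Tendsto W22p (𝓝[>] 0) (𝓝 (1 / √π)) := by
  have h := ((tendsto_V_zero.comp tendsto_sq_zero).sqrt.sqrt).div_const 6
  have h4 : √(√(1296 / π ^ 2)) / 6 = 1 / √π := by
    have hp := pi_pos
    have : 1296 / π ^ 2 = ((6 / √π) ^ 2) ^ 2 := by
      rw [div_pow, sq_sqrt hp.le]; ring
    rw [this, sqrt_sq (by positivity), sqrt_sq (by positivity)]
    ring
  rw [h4] at h
  refine h.congr' ?_
  filter_upwards [Ioo_mem_nhdsGT one_pos] with x hx
  rw [W_eq hx]; rfl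

lemma W_one : Tendsto W22p (𝓝[<] 1) atTop := by
  have h := (tendsto_sqrt_atTop.comp (tendsto_sqrt_atTop.comp
    (tendsto_V_one.comp tendsto_sq_one))).atTop_div_const (r := 6) (by norm_num)
  refine h.congr' ?_
  filter_upwards [Ioo_mem_nhdsLT zero_lt_one] with x hx
  rw [W_eq hx]; rfl

lemma Y_eq (k : ℝ) : Y22p k = -√(Am (k ^ 2) / √(1 - k ^ 2)) := rfl

lemma Y_anti : StrictAntiOn Y22p (Ioo 0 1) := by
  intro a ha b hb hab
  rw [Y_eq, Y_eq, neg_lt_neg_iff]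
  have hs : a ^ 2 < b ^ 2 := by have := ha.1; gcongr
  have h : Am (a ^ 2) < Am (b ^ 2) := Am_mono (sq_mem ha) (sq_mem hb) hs
  have h1 := Am_pos (sq_mem ha)
  have h2 : 0 < 1 - b ^ 2 := by linarith [(sq_mem hb).2]
  apply sqrt_lt_sqrt (by positivity)
  have h3 : √(1 - b ^ 2) ≤ √(1 - a ^ 2) := sqrt_le_sqrt (by linarith)
  have h4 : 0 < √(1 - b ^ 2) := sqrt_pos.2 h2
  exact div_lt_div₀ h h3 (by linarith) h4

lemma Y_neg {k : ℝ} (hk : k ∈ Ioo (0:ℝ) 1) : Y22p k < 0 := by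
  have h1 := Am_pos (sq_mem hk)
  have h2 : 0 < 1 - k ^ 2 := by linarith [(sq_mem hk).2]
  rw [Y_eq, neg_lt_zero]
  positivity

lemma Y_cont {k : ℝ} (h : k ^ 2 ∈ Ioo (-1:ℝ) 1) : ContinuousAt Y22p k := by
  have h2 : 0 < 1 - k ^ 2 := by linarith [h.2]
  have hA : ContinuousAt (fun k => Am (k ^ 2)) k :=
    ContinuousAt.comp (f := fun k : ℝ => k ^ 2) (hasDerivAt_Am h).continuousAt (by fun_prop)
  have hs : ContinuousAt (fun k : ℝ => √(1 - k ^ 2)) k := by fun_prop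
  exact ((hA.div hs (sqrt_pos.2 h2).ne').sqrt).neg

lemma Y_zero : Tendsto Y22p (𝓝[>] 0) (𝓝 0) := by
  have h := (Y_cont (k := 0) (by norm_num)).tendsto
  have h0 : Y22p 0 = 0 := by simp [Y_eq, Am_zero]
  rw [h0] at h
  exact h.mono_left nhdsWithin_le_nhds

lemma Y_one : Tendsto Y22p (𝓝[<] 1) atBot := by
  have hh : (1/2 : ℝ) ∈ Ioo (0:ℝ) 1 := by norm_num
  have h1 : Tendsto (fun m : ℝ => √(1 - m)) (𝓝[<] 1) (𝓝[>] 0) := by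
    rw [tendsto_nhdsWithin_iff]
    constructor
    · have := (tendsto_one_sub.mono_right nhdsWithin_le_nhds).sqrt
      rwa [sqrt_zero] at this
    · filter_upwards [self_mem_nhdsWithin] with x hx
      have : x < 1 := hx
      exact mem_Ioi.2 (sqrt_pos.2 (by linarith))
  have h2 := (h1.inv_tendsto_nhdsGT_zero).const_mul_atTop (Am_pos hh)
  have h3 : Tendsto (fun m => Am m / √(1 - m)) (𝓝[<] 1) atTop := by
    refine tendsto_atTop_mono' _ ?_ h2
    filter_upwards [Ioo_mem_nhdsLT hh.2] with x hx
    have hx' : x ∈ Ioo (0:ℝ) 1 := ⟨hh.1.trans hx.1, hx.2⟩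
    have h4 := Am_mono hh hx' hx.1
    rw [div_eq_mul_inv (Am x)]
    exact mul_le_mul_of_nonneg_right h4.le (by simp only [Pi.inv_apply]; positivity)
  exact tendsto_neg_atTop_atBot.comp (tendsto_sqrt_atTop.comp (h3.comp tendsto_sq_one))

lemma Y_image : Iio 0 ⊆ Y22p '' Ioo 0 1 := by
  refine isPreconnected_Ioo.intermediate_value_Iio (l₁ := 𝓝[<] 1) (l₂ := 𝓝[>] 0) ?_ ?_ ?_
    Y_one Y_zero
  · exact le_principal_iff.2 (Ioo_mem_nhdsLT zero_lt_one)
  · exact le_principal_iff.2 (Ioo_mem_nhdsGT zero_lt_one)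
  · intro k hk
    exact (Y_cont (sub01 (sq_mem hk))).continuousWithinAt

/-- `Y22p` strictly decreases on `(0,1)` from `0` to `−∞`, `W22p` strictly increases
on `(0,1)` from `1/√π` to `+∞`, and the parametric curve
`{(Y22p(k), W22p(k)) : k ∈ (0,1)}` is the graph of a function `W_conj^{22+}` strictly
decreasing from `+∞` to `1/√π` on `(−∞, 0)`. -/
theorem curve_CN_plus_graph :
    StrictAntiOn Y22p (Set.Ioo 0 1) ∧
    StrictMonoOn W22p (Set.Ioo 0 1) ∧
    Tendsto Y22p (nhdsWithin 0 (Set.Ioi 0)) (nhds 0) ∧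
    Tendsto W22p (nhdsWithin 0 (Set.Ioi 0)) (nhds (1 / Real.sqrt π)) ∧
    Tendsto Y22p (nhdsWithin 1 (Set.Iio 1)) atBot ∧
    Tendsto W22p (nhdsWithin 1 (Set.Iio 1)) atTop ∧
    ∃ Wconj : ℝ → ℝ,
      StrictAntiOn Wconj (Set.Iio 0) ∧
      Tendsto Wconj atBot atTop ∧
      Tendsto Wconj (nhdsWithin 0 (Set.Iio 0)) (nhds (1 / Real.sqrt π)) ∧
      (fun k => (Y22p k, W22p k)) '' (Set.Ioo 0 1) =
        (fun Y => (Y, Wconj Y)) '' (Set.Iio 0) := by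
  refine ⟨Y_anti, W_mono, Y_zero, W_zero, Y_one, W_one, ?_⟩
  choose! g hg hgY using (fun y (hy : y ∈ Iio (0:ℝ)) => Y_image hy)
  have hg_lt : ∀ y ∈ Iio (0:ℝ), ∀ k ∈ Ioo (0:ℝ) 1, y < Y22p k → k < g y := by
    intro y hy k hk h
    rw [← hgY y hy] at h
    exact (Y_anti.lt_iff_gt (hg y hy) hk).1 h
  have hg_gt : ∀ y ∈ Iio (0:ℝ), ∀ k ∈ Ioo (0:ℝ) 1, Y22p k < y → g y < k := by
    intro y hy k hk h
    rw [← hgY y hy] at h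
    exact (Y_anti.lt_iff_gt hk (hg y hy)).1 h
  have hl1 : Tendsto g atBot (𝓝[<] 1) := by
    intro s hs
    obtain ⟨l, hl, hls⟩ := (mem_nhdsLT_iff_exists_mem_Ico_Ioo_subset zero_lt_one).1 hs
    have hk : (l + 1) / 2 ∈ Ioo (0:ℝ) 1 := ⟨by linarith [hl.1], by linarith [hl.2]⟩
    rw [mem_map]
    filter_upwards [eventually_lt_atBot (Y22p ((l + 1) / 2))] with y hy
    have hy0 : y ∈ Iio (0:ℝ) := hy.trans (Y_neg hk)
    exact hls ⟨by linarith [hg_lt y hy0 _ hk hy, hl.2], (hg y hy0).2⟩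
  have hl0 : Tendsto g (𝓝[<] 0) (𝓝[>] 0) := by
    intro s hs
    obtain ⟨l, hl, hls⟩ := (mem_nhdsGT_iff_exists_mem_Ioc_Ioo_subset zero_lt_one).1 hs
    have hk : l / 2 ∈ Ioo (0:ℝ) 1 := ⟨by linarith [hl.1], by linarith [hl.1, hl.2]⟩
    rw [mem_map]
    filter_upwards [Ioo_mem_nhdsLT (Y_neg hk)] with y hy
    have hy0 : y ∈ Iio (0:ℝ) := hy.2
    exact hls ⟨(hg y hy0).1, by linarith [hg_gt y hy0 _ hk hy.1, hl.1]⟩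
  refine ⟨fun y => W22p (g y), ?_, W_one.comp hl1, W_zero.comp hl0, ?_⟩
  · intro a ha b hb hab
    refine W_mono (hg b hb) (hg a ha) ?_
    apply hg_lt a ha _ (hg b hb)
    rwa [hgY b hb]
  · ext p
    constructor
    · rintro ⟨k, hk, rfl⟩
      refine ⟨Y22p k, Y_neg hk, ?_⟩
      have : g (Y22p k) = k := Y_anti.injOn (hg _ (Y_neg hk)) hk (hgY _ (Y_neg hk))
      simp only [this]
    · rintro ⟨y, hy, rfl⟩
      refine ⟨g y, hg y hy, ?_⟩
      simp only [hgY y hy]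
end

section
/- As k → 0⁺ the following Taylor expansions hold: −√(ι₄(k)/√(1 − k²)) = −(√π/4)k² + o(k³); (k⁴K(k) − ι₄(k)(8 − 7k²))/(12√(ι₄(k)³(1 − k²)^{3/2})) = 1/√π + (3/(16√π))k² + o(k³); √(ι₄(k)) = (√π/4)k² + o(k³); and −(k⁴K(k)(1 − k²) − ι₄(k)(8 − 9k² + k⁴))/(12 ι₄(k)^{3/2}(1 − k²)) = 1/√π − (3/(16√π))k² + o(k³). Here ι₄(k) = (2 − k²)K(k) − 2E(k), and f(k) = g(k) + o(k³) means (f(k) − g(k))/k³ → 0 as k → 0⁺. -/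
open Real Set Filter Topology

lemma inv_sqrt_bound (x : ℝ) (h0 : 0 ≤ x) (h1 : x ≤ 1/2) :
    |1 / √(1 - x) - (1 + x/2 + 3/8*x^2 + 5/16*x^3)| ≤ 2 * x^4 := by
  have hpos : 0 < 1 - x := by linarith
  have hs : 0 < √(1 - x) := Real.sqrt_pos.2 hpos
  set u := 1 / √(1 - x) with hu
  have hu0 : 0 < u := by positivity
  have husq : u^2 * (1 - x) = 1 := by
    rw [hu, div_pow, Real.sq_sqrt hpos.le]; field_simp
  set p := 1 + x/2 + 3/8*x^2 + 5/16*x^3 with hp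
  have hp1 : 1 ≤ p := by rw [hp]; nlinarith [pow_nonneg h0 2, pow_nonneg h0 3]
  have key : (u - p) * ((u + p) * (1 - x)) = x^4 * (35/64 + 7/32*x + 35/256*x^2+25/256*x^3) := by
    have : (u - p) * ((u + p) * (1 - x)) = u^2*(1-x) - p^2*(1-x) := by ring
    rw [this, husq, hp]; ring
  have hd : 1/2 ≤ (u + p) * (1 - x) := by nlinarith
  have hx4 : 0 ≤ x^4 := by positivity
  have hq : 35/64 + 7/32*x + 35/256*x^2+25/256*x^3 ≤ 1 := by
    have : x^2 ≤ 1/4 := by nlinarith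
    have : x^3 ≤ 1/8 := by nlinarith
    linarith
  have hq0 : 0 ≤ 35/64 + 7/32*x + 35/256*x^2+25/256*x^3 := by positivity
  have hup : 0 ≤ u - p := by
    by_contra h
    push Not at h
    have : 0 ≤ x^4 * (35/64 + 7/32*x + 35/256*x^2+25/256*x^3) := by positivity
    nlinarith
  rw [abs_of_nonneg hup]
  nlinarith

lemma int_sin2 : ∫ t in (0:ℝ)..(π/2), Real.sin t ^ 2 = π/4 := by
  rw [integral_sin_sq, Real.cos_pi_div_two]; simp; ring
lemma int_sin4 : ∫ t in (0:ℝ)..(π/2), Real.sin t ^ 4 = 3*π/16 := by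
  have := integral_sin_pow (a := 0) (b := π/2) 2
  simp only [Nat.reduceAdd] at this
  rw [this, int_sin2, Real.cos_pi_div_two]; simp; ring
lemma int_sin6 : ∫ t in (0:ℝ)..(π/2), Real.sin t ^ 6 = 5*π/32 := by
  have := integral_sin_pow (a := 0) (b := π/2) 4
  simp only [Nat.reduceAdd] at this
  rw [this, int_sin4, Real.cos_pi_div_two]; simp; ring
lemma int_sin8 : ∫ t in (0:ℝ)..(π/2), Real.sin t ^ 8 = 35*π/256 := by
  have := integral_sin_pow (a := 0) (b := π/2) 6
  simp only [Nat.reduceAdd] at this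
  rw [this, int_sin6, Real.cos_pi_div_two]; simp; ring

lemma int_poly (a b c d e : ℝ) : ∫ t in (0:ℝ)..(π/2),
    (a + b * Real.sin t ^ 2 + c * Real.sin t ^ 4 + d * Real.sin t ^ 6 + e * Real.sin t ^ 8)
    = π/2 * (a + b/2 + 3/8*c + 5/16*d + 35/128*e) := by
  rw [intervalIntegral.integral_add, intervalIntegral.integral_add, intervalIntegral.integral_add,
    intervalIntegral.integral_add]
  · simp only [intervalIntegral.integral_const_mul, int_sin2, int_sin4, int_sin6, int_sin8,
      intervalIntegral.integral_const, smul_eq_mul]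
    ring
  all_goals exact Continuous.intervalIntegrable (by fun_prop) _ _

lemma ks_bound (k t : ℝ) (hk : k^2 ≤ 1/2) : k^2 * Real.sin t ^ 2 ≤ 1/2 := by
  nlinarith [Real.sin_sq_le_one t, sq_nonneg k, sq_nonneg (Real.sin t)]

lemma cont_u (k : ℝ) (hk : k^2 ≤ 1/2) :
    Continuous (fun t => 1 / √(1 - k^2 * Real.sin t ^ 2)) := by
  refine Continuous.div (by fun_prop) (by fun_prop) fun t => ?_
  have := ks_bound k t hk
  exact (Real.sqrt_pos.2 (by linarith)).ne'

lemma int_bound (w : ℝ → ℝ) (hw : Continuous w) (hw1 : ∀ t, |w t| ≤ 1) (k : ℝ) (hk : k^2 ≤ 1/2) :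
    |(∫ t in (0:ℝ)..(π/2), w t * (1 / √(1 - k^2 * Real.sin t ^ 2))) -
      ∫ t in (0:ℝ)..(π/2), w t * (1 + (k^2 * Real.sin t^2)/2 + 3/8*(k^2 * Real.sin t^2)^2
        + 5/16*(k^2 * Real.sin t^2)^3)| ≤ π * k^8 := by
  have hc := cont_u k hk
  rw [← intervalIntegral.integral_sub (Continuous.intervalIntegrable (by fun_prop) _ _)
    (Continuous.intervalIntegrable (by fun_prop) _ _)]
  have := intervalIntegral.norm_integral_le_of_norm_le_const (a := 0) (b := π/2) (C := 2 * k^8)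
    (f := fun t => w t * (1 / √(1 - k^2 * Real.sin t ^ 2)) - w t * (1 + (k^2 * Real.sin t^2)/2 + 3/8*(k^2 * Real.sin t^2)^2
        + 5/16*(k^2 * Real.sin t^2)^3)) ?_
  · rw [Real.norm_eq_abs] at this
    refine this.trans (le_of_eq ?_)
    rw [sub_zero, abs_of_pos (by positivity : (0:ℝ) < π/2)]; ring
  · intro t _
    rw [← mul_sub, Real.norm_eq_abs, abs_mul]
    have h1 := inv_sqrt_bound (k^2 * Real.sin t^2) (by positivity) (ks_bound k t hk)
    have h2 : (k^2 * Real.sin t^2)^4 ≤ k^8 := by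
      have : (k^2 * Real.sin t^2)^4 = k^8 * (Real.sin t^2)^4 := by ring
      rw [this]
      exact mul_le_of_le_one_right (by positivity) (pow_le_one₀ (by positivity) (Real.sin_sq_le_one t))
    calc _ ≤ 1 * _ := mul_le_mul_of_nonneg_right (hw1 t) (abs_nonneg _)
      _ ≤ _ := by linarith

lemma K_bound (k : ℝ) (hk : k^2 ≤ 1/2) :
    |K k - π/2 * (1 + k^2/4 + 9/64*k^4 + 25/256*k^6)| ≤ π * k^8 := by
  have h := int_bound (fun _ => 1) continuous_const (by simp) k hk
  simp only [one_mul] at h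
  have e := int_poly 1 (k^2/2) (3/8*k^4) (5/16*k^6) 0
  have : (∫ t in (0:ℝ)..(π/2), (1 + (k^2 * Real.sin t^2)/2 + 3/8*(k^2 * Real.sin t^2)^2
        + 5/16*(k^2 * Real.sin t^2)^3)) = π/2 * (1 + k^2/4 + 9/64*k^4 + 25/256*k^6) := by
    rw [show π/2 * (1 + k^2/4 + 9/64*k^4 + 25/256*k^6) = π/2 * (1 + k^2/2/2 + 3/8*(3/8*k^4) + 5/16*(5/16*k^6) + 35/128*0) by ring, ← e]
    congr 1; ext t; ring
  rw [this] at h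
  exact h

lemma iota_eq_s11 (k : ℝ) (hk : k^2 ≤ 1/2) :
    ι₄ k = k^2 * ∫ t in (0:ℝ)..(π/2), (2 * Real.sin t^2 - 1) * (1 / √(1 - k^2 * Real.sin t ^ 2)) := by
  have hc := cont_u k hk
  unfold ι₄ K E
  rw [← intervalIntegral.integral_const_mul, ← intervalIntegral.integral_const_mul,
    ← intervalIntegral.integral_const_mul,
    ← intervalIntegral.integral_sub (Continuous.intervalIntegrable (by fun_prop) _ _)
    (Continuous.intervalIntegrable (by fun_prop) _ _)]
  congr 1; ext t
  have hp : 0 < 1 - k^2 * Real.sin t ^ 2 := by linarith [ks_bound k t hk]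
  have hs := Real.sqrt_pos.2 hp
  have hq := Real.sq_sqrt hp.le
  field_simp
  rw [hq]; ring

lemma iota_bound (k : ℝ) (hk : k^2 ≤ 1/2) :
    |ι₄ k - π/16 * k^4 * (1 + 3/4*k^2 + 75/128*k^4)| ≤ π * k^10 := by
  have h := int_bound (fun t => 2 * Real.sin t^2 - 1) (by fun_prop) (fun t => by
    rw [abs_le]; constructor <;> nlinarith [Real.sin_sq_le_one t, sq_nonneg (Real.sin t)]) k hk
  have e := int_poly (-1) (2 - k^2/2) (k^2 - 3/8*k^4) (3/4*k^4-5/16*k^6) (5/8*k^6)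
  have : (∫ t in (0:ℝ)..(π/2), (2 * Real.sin t^2 - 1) * (1 + (k^2 * Real.sin t^2)/2 + 3/8*(k^2 * Real.sin t^2)^2
        + 5/16*(k^2 * Real.sin t^2)^3)) = π/16 * k^2 * (1 + 3/4*k^2 + 75/128*k^4) := by
    trans
    · refine Eq.trans ?_ e
      congr 1; ext t; ring
    · ring
  rw [this] at h
  rw [iota_eq_s11 k hk]
  calc _ = k^2 * |_| := by
        rw [← abs_of_nonneg (sq_nonneg k), ← abs_mul, abs_of_nonneg (sq_nonneg k), mul_sub]
        congr 2; ring
    _ ≤ k^2 * (π * k^8) := mul_le_mul_of_nonneg_left h (sq_nonneg k)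
    _ = _ := by ring

/-- `f k = a + b k² + O(k⁴)` as `k → 0⁺`. -/
def T (f : ℝ → ℝ) (a b : ℝ) : Prop :=
  (fun k => f k - (a + b * k^2)) =O[𝓝[>] (0:ℝ)] (fun k => k^4)

lemma T_poly_bdd (a b : ℝ) : (fun k : ℝ => a + b * k^2) =O[𝓝[>] (0:ℝ)] (fun _ => (1:ℝ)) := by
  have h : Tendsto (fun k : ℝ => a + b * k^2) (𝓝[>] 0) (𝓝 (a + b * 0^2)) :=
    (Continuous.tendsto (by fun_prop) _).mono_left nhdsWithin_le_nhds
  exact h.isBigO_one ℝ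

lemma pow_isBigO (m n : ℕ) (h : m ≤ n) :
    (fun k : ℝ => k^n) =O[𝓝[>] (0:ℝ)] (fun k => k^m) :=
  Asymptotics.IsBigO.of_bound 1 (by
    have : ∀ᶠ k in 𝓝[>] (0:ℝ), k ∈ Set.Ioo (0:ℝ) 1 := Ioo_mem_nhdsGT one_pos
    filter_upwards [this] with k hk
    have hk0 := hk.1
    rw [Real.norm_eq_abs, Real.norm_eq_abs, abs_of_pos (by positivity), abs_of_pos (by positivity),
      one_mul]
    exact pow_le_pow_of_le_one hk0.le hk.2.le h)

lemma T.bdd {f : ℝ → ℝ} {a b : ℝ} (h : T f a b) : f =O[𝓝[>] (0:ℝ)] (fun _ => (1:ℝ)) := by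
  have h1 := Asymptotics.IsBigO.trans h (pow_isBigO 0 4 (by norm_num))
  simp only [pow_zero] at h1
  exact (h1.add (T_poly_bdd a b)).congr_left fun k => by ring

lemma T.mul {f g : ℝ → ℝ} {a b c d : ℝ} (hf : T f a b) (hg : T g c d) :
    T (fun k => f k * g k) (a*c) (a*d+b*c) := by
  have h1 := Asymptotics.IsBigO.mul hf hg.bdd
  have h2 := (T_poly_bdd a b).mul hg
  have h3 : (fun k : ℝ => b*d*k^4) =O[𝓝[>] (0:ℝ)] (fun k => k^4) :=
    Asymptotics.isBigO_const_mul_self _ _ _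
  simp only [mul_one, one_mul] at h1 h2
  refine ((h1.add h2).add h3).congr_left fun k => ?_
  ring

lemma T.sub_one {f : ℝ → ℝ} {a b : ℝ} (h : T f a b) :
    (fun k => f k - a) =O[𝓝[>] (0:ℝ)] (fun k => k^2) := by
  have h1 := Asymptotics.IsBigO.trans h (pow_isBigO 2 4 (by norm_num))
  have h2 : (fun k : ℝ => b*k^2) =O[𝓝[>] (0:ℝ)] (fun k => k^2) :=
    Asymptotics.isBigO_const_mul_self _ _ _
  refine (h1.add h2).congr_left fun k => ?_
  ring

lemma sq_tendsto : Tendsto (fun k : ℝ => k^2) (𝓝[>] 0) (𝓝 0) := by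
  have : Tendsto (fun k : ℝ => k^2) (𝓝[>] 0) (𝓝 (0^2)) :=
    (Continuous.tendsto (by fun_prop) _).mono_left nhdsWithin_le_nhds
  simpa using this

lemma T.tendsto {f : ℝ → ℝ} {a b : ℝ} (h : T f a b) : Tendsto f (𝓝[>] 0) (𝓝 a) := by
  have := (h.sub_one.trans_tendsto sq_tendsto).add_const a
  simpa using this

lemma rpow_taylor (p : ℝ) :
    (fun x : ℝ => (1 + x)^p - (1 + p * x)) =O[𝓝 (0:ℝ)] (fun x => x^2) := by
  have := (Real.one_add_rpow_hasFPowerSeriesAt_zero (a := p)).isBigO_sub_partialSum_pow 2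
  simpa [FormalMultilinearSeries.partialSum, Finset.sum_range_succ, binomialSeries, mul_comm] using this

lemma T.rpow {f : ℝ → ℝ} {b : ℝ} (h : T f 1 b) (p : ℝ) : T (fun k => f k ^ p) 1 (p * b) := by
  have ht : Tendsto (fun k => f k - 1) (𝓝[>] 0) (𝓝 0) := h.sub_one.trans_tendsto sq_tendsto
  have h1 := (rpow_taylor p).comp_tendsto ht
  have h2 := h1.trans (h.sub_one.pow 2)
  have h3 := Asymptotics.IsBigO.const_mul_left h p
  have h2' : (fun k => f k ^ p - (1 + p * (f k - 1))) =O[𝓝[>] (0:ℝ)] (fun k => k^4) := by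
    refine (h2.congr_left fun k => ?_).congr_right fun k => ?_
    · simp
    · ring
  refine (h2'.add h3).congr_left fun k => ?_
  ring

lemma T.congr {f g : ℝ → ℝ} {a b : ℝ} (h : T f a b) (hfg : f =ᶠ[𝓝[>] 0] g) : T g a b := by
  refine Asymptotics.IsBigO.congr' h ?_ (Eventually.of_forall fun _ => rfl)
  filter_upwards [hfg] with k hk
  rw [hk]

lemma final {f : ℝ → ℝ} (h : f =O[𝓝[>] (0:ℝ)] (fun k => k^4)) :
    Tendsto (fun k => f k / k^3) (𝓝[>] 0) (𝓝 0) := by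
  have h1 := h.mul (Asymptotics.isBigO_refl (fun k : ℝ => (k^3)⁻¹) (𝓝[>] (0:ℝ)))
  have h2 : Tendsto (fun k : ℝ => k^4 * (k^3)⁻¹) (𝓝[>] 0) (𝓝 0) := by
    have : Tendsto (fun k : ℝ => k) (𝓝[>] 0) (𝓝 0) := tendsto_id.mono_left nhdsWithin_le_nhds
    refine this.congr' ?_
    filter_upwards [self_mem_nhdsWithin] with k hk
    have : (0:ℝ) < k := hk
    field_simp
  simpa [div_eq_mul_inv] using h1.trans_tendsto h2

lemma small : ∀ᶠ k in 𝓝[>] (0:ℝ), 0 < k ∧ k^2 ≤ 1/2 := by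
  have : ∀ᶠ k in 𝓝[>] (0:ℝ), k ∈ Set.Ioo (0:ℝ) (1/2) := Ioo_mem_nhdsGT (by norm_num)
  filter_upwards [this] with k hk
  exact ⟨hk.1, by nlinarith [hk.1, hk.2]⟩

lemma T_of_bound {f : ℝ → ℝ} {a b : ℝ} (C : ℝ)
    (h : ∀ k, 0 < k → k^2 ≤ 1/2 → |f k - (a + b*k^2)| ≤ C * k^4) : T f a b := by
  refine Asymptotics.IsBigO.of_bound C ?_
  filter_upwards [small] with k hk
  rw [Real.norm_eq_abs, Real.norm_eq_abs, abs_of_nonneg (by positivity : 0 ≤ k^4)]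
  exact h k hk.1 hk.2

noncomputable def J (k : ℝ) : ℝ := ι₄ k / (π/16 * k^4)
noncomputable def N2 (k : ℝ) : ℝ := (k^4 * K k - ι₄ k * (8 - 7*k^2)) / (3*π/16 * k^6)
noncomputable def N4 (k : ℝ) : ℝ := (ι₄ k * (8 - k^2) - k^4 * K k) / (3*π/16 * k^6)

lemma div_bound {x c y B : ℝ} (hc : 0 < c) (h : |x - c * y| ≤ c * B) : |x / c - y| ≤ B := by
  have : x / c - y = (x - c*y)/c := by field_simp
  rw [this, abs_div, abs_of_pos hc, div_le_iff₀ hc]; linarith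

lemma TJ : T J 1 (3/4) := by
  refine T_of_bound 20 fun k hk hk2 => ?_
  have h := iota_bound k hk2
  have hp := Real.pi_pos
  refine div_bound (by positivity) ?_
  have e : k^10 ≤ 1/2 * k^8 := by nlinarith [pow_pos hk 8]
  have e1 := mul_le_mul_of_nonneg_left e hp.le
  have : 0 < π * k^8 := by positivity
  rw [abs_le] at h ⊢
  constructor <;> nlinarith [h.1, h.2]

lemma TN2 : T N2 1 (9/16) := by
  refine T_of_bound 100 fun k hk hk2 => ?_
  have h := iota_bound k hk2
  have h' := K_bound k hk2
  have hp := Real.pi_pos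
  refine div_bound (by positivity) ?_
  obtain ⟨e, he⟩ : ∃ e, e = ι₄ k - π/16 * k^4 * (1 + 3/4*k^2 + 75/128*k^4) := ⟨_, rfl⟩
  obtain ⟨d, hd⟩ : ∃ d, d = K k - π/2 * (1 + k^2/4 + 9/64*k^4 + 25/256*k^6) := ⟨_, rfl⟩
  rw [← he] at h
  rw [← hd] at h'
  have hK : K k = π/2 * (1 + k^2/4 + 9/64*k^4 + 25/256*k^6) + d := by linarith
  have hI : ι₄ k = π/16 * k^4 * (1 + 3/4*k^2 + 75/128*k^4) + e := by linarith
  rw [hK, hI]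
  have hX : (k^4 * (π/2 * (1 + k^2/4 + 9/64*k^4 + 25/256*k^6) + d) -
     (π/16 * k^4 * (1 + 3/4*k^2 + 75/128*k^4) + e) * (8 - 7*k^2)) - 3*π/16*k^6 * (1 + 9/16*k^2)
     = π * k^10 * (25/512 + 7*75/(16*128)) + k^4*d - (8-7*k^2)*e := by ring
  rw [hX]
  have hd2 : |k^4 * d| ≤ π * k^10 := by
    rw [abs_mul, abs_of_pos (by positivity : 0 < k^4)]
    have e1 : k^4 * |d| ≤ k^4 * (π * k^8) := mul_le_mul_of_nonneg_left h' (by positivity)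
    have e2 : π * k^10 * k^2 ≤ π * k^10 * 1 := mul_le_mul_of_nonneg_left (by linarith) (by positivity)
    linarith [show k^4 * (π * k^8) = π * k^10 * k^2 by ring]
  have he2 : |(8-7*k^2) * e| ≤ 8 * (π * k^10) := by
    rw [abs_mul]
    exact mul_le_mul (abs_le.2 ⟨by linarith, by nlinarith⟩) h (abs_nonneg _) (by norm_num)
  have : 0 < π * k^10 := by positivity
  rw [abs_le] at hd2 he2 ⊢
  constructor <;> nlinarith [hd2.1, hd2.2, he2.1, he2.2]

lemma TN4 : T N4 1 (15/16) := by
  refine T_of_bound 100 fun k hk hk2 => ?_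
  have h := iota_bound k hk2
  have h' := K_bound k hk2
  have hp := Real.pi_pos
  refine div_bound (by positivity) ?_
  obtain ⟨e, he⟩ : ∃ e, e = ι₄ k - π/16 * k^4 * (1 + 3/4*k^2 + 75/128*k^4) := ⟨_, rfl⟩
  obtain ⟨d, hd⟩ : ∃ d, d = K k - π/2 * (1 + k^2/4 + 9/64*k^4 + 25/256*k^6) := ⟨_, rfl⟩
  rw [← he] at h
  rw [← hd] at h'
  have hK : K k = π/2 * (1 + k^2/4 + 9/64*k^4 + 25/256*k^6) + d := by linarith
  have hI : ι₄ k = π/16 * k^4 * (1 + 3/4*k^2 + 75/128*k^4) + e := by linarith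
  rw [hK, hI]
  have hX : ((π/16 * k^4 * (1 + 3/4*k^2 + 75/128*k^4) + e) * (8 - k^2) -
     k^4 * (π/2 * (1 + k^2/4 + 9/64*k^4 + 25/256*k^6) + d)) - 3*π/16*k^6 * (1 + 15/16*k^2)
     = - (π * k^10 * (25/512 + 75/(16*128))) - k^4*d + (8-k^2)*e := by ring
  rw [hX]
  have hd2 : |k^4 * d| ≤ π * k^10 := by
    rw [abs_mul, abs_of_pos (by positivity : 0 < k^4)]
    have e1 : k^4 * |d| ≤ k^4 * (π * k^8) := mul_le_mul_of_nonneg_left h' (by positivity)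
    have e2 : π * k^10 * k^2 ≤ π * k^10 * 1 := mul_le_mul_of_nonneg_left (by linarith) (by positivity)
    linarith [show k^4 * (π * k^8) = π * k^10 * k^2 by ring]
  have he2 : |(8-k^2) * e| ≤ 8 * (π * k^10) := by
    rw [abs_mul]
    exact mul_le_mul (abs_le.2 ⟨by linarith, by nlinarith⟩) h (abs_nonneg _) (by norm_num)
  have : 0 < π * k^10 := by positivity
  rw [abs_le] at hd2 he2 ⊢
  constructor <;> nlinarith [hd2.1, hd2.2, he2.1, he2.2]

lemma TM : T (fun k => 1 - k^2) 1 (-1) :=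
  T_of_bound 1 fun k hk _ => by
    have : (1 - k^2) - (1 + -1*k^2) = 0 := by ring
    rw [this, abs_zero]; positivity

lemma good : ∀ᶠ k in 𝓝[>] (0:ℝ), 0 < k ∧ 0 < 1 - k^2 ∧ 0 < J k ∧ ι₄ k = (√π/4*k^2)^2 * J k := by
  filter_upwards [small, TJ.tendsto.eventually (lt_mem_nhds one_pos)] with k hk hJ
  refine ⟨hk.1, by linarith [hk.2], hJ, ?_⟩
  have := hk.1
  have := Real.pi_pos
  rw [J, mul_pow, div_pow, Real.sq_sqrt Real.pi_pos.le]
  field_simp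
  norm_num

lemma T.scaled {f : ℝ → ℝ} {b : ℝ} (h : T f 1 b) (c : ℝ) :
    (fun k => c * k^2 * f k - c * k^2) =O[𝓝[>] (0:ℝ)] (fun k => k^4) := by
  have h2 : (fun k : ℝ => c*k^2) =O[𝓝[>] (0:ℝ)] (fun k => k^2) :=
    Asymptotics.isBigO_const_mul_self _ _ _
  refine ((h2.mul h.sub_one).congr_left fun k => ?_).congr_right fun k => ?_ <;> ring

lemma rpow_cube (x : ℝ) (hx : 0 < x) : x ^ (-(3:ℝ)/2) = ((x ^ ((1:ℝ)/2))^3)⁻¹ := by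
  rw [← Real.rpow_natCast, ← Real.rpow_mul hx.le, ← Real.rpow_neg hx.le]; norm_num

lemma sqrt_iota {k : ℝ} (hk : 0 < k) (hJ : 0 < J k) (hI : ι₄ k = (√π/4*k^2)^2 * J k) :
    √(ι₄ k) = √π/4*k^2 * (J k)^((1:ℝ)/2) := by
  rw [hI, Real.sqrt_mul (by positivity), Real.sqrt_sq (by positivity), Real.sqrt_eq_rpow (J k)]

/-- Taylor expansions as `k → 0⁺`:
`−√(ι₄(k)/√(1 − k²)) = −(√π/4)k² + o(k³)`,
`(k⁴K(k) − ι₄(k)(8 − 7k²))/(12√(ι₄(k)³(1 − k²)^{3/2})) = 1/√π + (3/(16√π))k² + o(k³)`,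
`√(ι₄(k)) = (√π/4)k² + o(k³)`, and
`−(k⁴K(k)(1 − k²) − ι₄(k)(8 − 9k² + k⁴))/(12 ι₄(k)^{3/2}(1 − k²)) = 1/√π − (3/(16√π))k² + o(k³)`. -/
theorem taylor_expansions_at_zero :
    Tendsto (fun k : ℝ =>
        ((-Real.sqrt (ι₄ k / Real.sqrt (1 - k^2))) - (-(Real.sqrt π / 4) * k^2)) / k^3)
      (nhdsWithin 0 (Set.Ioi 0)) (nhds 0) ∧
    Tendsto (fun k : ℝ =>
        ((k^4 * K k - ι₄ k * (8 - 7 * k^2)) /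
            (12 * Real.sqrt ((ι₄ k)^3 * (1 - k^2) ^ ((3:ℝ)/2)))
          - (1 / Real.sqrt π + 3 / (16 * Real.sqrt π) * k^2)) / k^3)
      (nhdsWithin 0 (Set.Ioi 0)) (nhds 0) ∧
    Tendsto (fun k : ℝ =>
        (Real.sqrt (ι₄ k) - (Real.sqrt π / 4) * k^2) / k^3)
      (nhdsWithin 0 (Set.Ioi 0)) (nhds 0) ∧
    Tendsto (fun k : ℝ =>
        (-((k^4 * K k * (1 - k^2) - ι₄ k * (8 - 9 * k^2 + k^4)) /
            (12 * (ι₄ k) ^ ((3:ℝ)/2) * (1 - k^2)))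
          - (1 / Real.sqrt π - 3 / (16 * Real.sqrt π) * k^2)) / k^3)
      (nhdsWithin 0 (Set.Ioi 0)) (nhds 0) := by
  have hs : 0 < √π := Real.sqrt_pos.2 Real.pi_pos
  have hss : √π^2 = π := Real.sq_sqrt Real.pi_pos.le
  refine ⟨?_, ?_, ?_, ?_⟩
  · have h := (((TJ.rpow (1/2)).mul (TM.rpow (-(1:ℝ)/4))))
    simp only [mul_one] at h
    refine final ((h.scaled (-(√π/4))).congr' ?_ (Eventually.of_forall fun _ => rfl))
    filter_upwards [good] with k hk
    obtain ⟨hk, hm, hJ, hI⟩ := hk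
    have hE : √(√(1 - k^2)) = ((1 - k^2)^(-(1:ℝ)/4))⁻¹ := by
      rw [Real.sqrt_eq_rpow, Real.sqrt_eq_rpow, ← Real.rpow_mul hm.le, ← Real.rpow_neg hm.le]
      norm_num
    rw [Real.sqrt_div' _ (Real.sqrt_nonneg _), hE, sqrt_iota hk hJ hI, div_inv_eq_mul]
    ring
  · have h := ((TN2.mul (TJ.rpow (-(3:ℝ)/2))).mul (TM.rpow (-(3:ℝ)/4)))
    refine final ((Asymptotics.IsBigO.const_mul_left h (1/√π)).congr' ?_
      (Eventually.of_forall fun _ => rfl))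
    filter_upwards [good] with k hk
    obtain ⟨hk, hm, hJ, hI⟩ := hk
    have hE : √((1 - k^2)^((3:ℝ)/2)) = ((1 - k^2)^(-(3:ℝ)/4))⁻¹ := by
      rw [Real.sqrt_eq_rpow, ← Real.rpow_mul hm.le, ← Real.rpow_neg hm.le]
      norm_num
    have hi : 0 < ι₄ k := by rw [hI]; positivity
    have hI3 : √(ι₄ k ^ 3) = √(ι₄ k)^3 := by
      rw [Real.sqrt_eq_iff_mul_self_eq (by positivity) (by positivity)]
      have hq := Real.sq_sqrt hi.le
      symm
      calc √(ι₄ k)^3 * √(ι₄ k)^3 = (√(ι₄ k)^2)^3 := by ring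
        _ = _ := by rw [hq]
    rw [Real.sqrt_mul (by positivity), hE, hI3, sqrt_iota hk hJ hI, N2, rpow_cube _ hJ]
    have hj : 0 < J k ^ ((1:ℝ)/2) := by positivity
    have hmm : 0 < (1 - k^2)^(-(3:ℝ)/4) := by positivity
    generalize J k ^ ((1:ℝ)/2) = j at *
    generalize (1 - k^2)^(-(3:ℝ)/4) = m at *
    generalize k^4 * K k - ι₄ k * (8 - 7*k^2) = X
    generalize √π = s at *
    rw [← hss]
    field_simp
    ring
  · have h := TJ.rpow (1/2)
    refine final ((h.scaled (√π/4)).congr' ?_ (Eventually.of_forall fun _ => rfl))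
    filter_upwards [good] with k hk
    obtain ⟨hk, hm, hJ, hI⟩ := hk
    rw [sqrt_iota hk hJ hI]
  · have h := TN4.mul (TJ.rpow (-(3:ℝ)/2))
    refine final ((Asymptotics.IsBigO.const_mul_left h (1/√π)).congr' ?_
      (Eventually.of_forall fun _ => rfl))
    filter_upwards [good] with k hk
    obtain ⟨hk, hm, hJ, hI⟩ := hk
    have hi : 0 < ι₄ k := by rw [hI]; positivity
    have hI3 : ι₄ k ^ ((3:ℝ)/2) = √(ι₄ k)^3 := by
      rw [Real.sqrt_eq_rpow, ← Real.rpow_natCast, ← Real.rpow_mul hi.le]; norm_num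
    rw [hI3, sqrt_iota hk hJ hI, N4, rpow_cube _ hJ]
    have hj : 0 < J k ^ ((1:ℝ)/2) := by positivity
    generalize J k ^ ((1:ℝ)/2) = j at *
    have hf : k^4 * K k * (1 - k^2) - ι₄ k * (8 - 9*k^2 + k^4)
        = -(ι₄ k * (8 - k^2) - k^4 * K k) * (1 - k^2) := by ring
    rw [hf, mul_div_mul_right _ _ hm.ne']
    generalize ι₄ k * (8 - k^2) - k^4 * K k = X
    generalize √π = s at *
    rw [← hss]
    field_simp
    ring
end
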